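/- arXiv:1507.03734 — 5 statements merged into one kernel-verified Lean document; each statement's English description precedes it below -/
import Mathlib

section
/- For every γ > 0, the function φ_γ(λ) := g*_γ(Aᵀλ) is differentiable with ∇φ_γ(λ) = A·u*_γ(Aᵀλ), and for all λ, λ̂ ∈ ℝⁿ one has the two-sided bound (γ/2)·‖u*_γ(Aᵀλ) − u*_γ(Aᵀλ̂)‖² ≤ φ_γ(λ) − φ_γ(λ̂) − ⟨∇φ_γ(λ̂), λ − λ̂⟩ ≤ (‖A‖²/(2γ))·‖λ − λ̂‖². -/
/-!
For fixed `z`, the function `F_z u = ⟪z, u⟫ - g u - γ b(u, uc)` is `γ`-strongly concave on the domain,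
so its maximizer `u_z` satisfies the quadratic growth bound
`F_z u + γ/2 ‖u - u_z‖² ≤ F_z u_z` (`quadratic_growth`).
With `z = Aᵀλ`, `ẑ = Aᵀλ̂`, the linearization error of `φ_γ` equals `F_z u_z - F_z u_ẑ`, and
quadratic growth of `F_z` gives the lower bound. The error also equals
`⟪z - ẑ, u_z - u_ẑ⟫ - (F_ẑ u_ẑ - F_ẑ u_z)`; quadratic growth of `F_ẑ`, Cauchy–Schwarz and Young's
inequality give the upper bound. The error is thus quadratically small, hence the gradient formula
(`hasGradientAt_of_quadratic_bound`).
-/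

open scoped RealInnerProductSpace

noncomputable section

/-- Bregman distance generated by `ω` with gradient `ω'`. -/
noncomputable def breg {p : ℕ} (ω : EuclideanSpace ℝ (Fin p) → ℝ)
    (ω' : EuclideanSpace ℝ (Fin p) → EuclideanSpace ℝ (Fin p))
    (u uh : EuclideanSpace ℝ (Fin p)) : ℝ :=
  ω u - ω uh - ⟪ω' uh, u - uh⟫

/-- Quadratic growth at the maximizer `v` of the strongly concave smoothed objective, obtained by
comparing `v` with points of the segment from `v` to `u` that tend to `v`. -/
theorem quadratic_growth {p : ℕ} {g ω : EuclideanSpace ℝ (Fin p) → ℝ}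
    {ω' : EuclideanSpace ℝ (Fin p) → EuclideanSpace ℝ (Fin p)}
    {s : Set (EuclideanSpace ℝ (Fin p))}
    (hg : ConvexOn ℝ s g) (hω : StrongConvexOn s 1 ω) {γ : ℝ} (hγ : 0 < γ)
    {z uc u v : EuclideanSpace ℝ (Fin p)} (hu : u ∈ s) (hv : v ∈ s)
    (hmax : ∀ w ∈ s, ⟪z, w⟫ - g w - γ * breg ω ω' w uc ≤ ⟪z, v⟫ - g v - γ * breg ω ω' v uc) :
    ⟪z, u⟫ - g u - γ * breg ω ω' u uc + γ / 2 * ‖u - v‖ ^ 2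
      ≤ ⟪z, v⟫ - g v - γ * breg ω ω' v uc := by
  have key : ∀ t ∈ Set.Ioo (0 : ℝ) 1,
      ⟪z, u⟫ - g u - γ * breg ω ω' u uc + γ / 2 * (1 - t) * ‖u - v‖ ^ 2
        ≤ ⟪z, v⟫ - g v - γ * breg ω ω' v uc := by
    rintro t ⟨ht0, ht1⟩
    have h1 : 0 ≤ 1 - t := by linarith
    have hm := hmax _ (hg.1 hu hv ht0.le h1 (by ring))
    have hgt := hg.2 hu hv ht0.le h1 (by ring)
    have hωt := mul_le_mul_of_nonneg_left (hω.2 hu hv ht0.le h1 (by ring)) hγ.le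
    simp only [breg, inner_sub_right, inner_add_right, real_inner_smul_right, smul_eq_mul]
      at hm hgt hωt ⊢
    refine le_of_mul_le_mul_left ?_ ht0
    linear_combination hm + hgt + hωt
  have hlim : Filter.Tendsto
      (fun t : ℝ => ⟪z, u⟫ - g u - γ * breg ω ω' u uc + γ / 2 * (1 - t) * ‖u - v‖ ^ 2)
      (nhdsWithin 0 (Set.Ioi 0))
      (nhds (⟪z, u⟫ - g u - γ * breg ω ω' u uc + γ / 2 * (1 - 0) * ‖u - v‖ ^ 2)) :=
    Filter.Tendsto.mono_left (Continuous.tendsto (by fun_prop) 0) nhdsWithin_le_nhds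
  have h := le_of_tendsto hlim
    (Filter.eventually_of_mem (Ioo_mem_nhdsGT zero_lt_one) key)
  simpa using h

theorem hasGradientAt_of_quadratic_bound {n : ℕ} {f : EuclideanSpace ℝ (Fin n) → ℝ}
    {a x : EuclideanSpace ℝ (Fin n)} {C : ℝ}
    (h : ∀ y, |f y - f x - ⟪a, y - x⟫| ≤ C * ‖y - x‖ ^ 2) : HasGradientAt f a x := by
  rw [hasGradientAt_iff_isLittleO]
  have hO : (fun y => f y - f x - ⟪a, y - x⟫) =O[nhds x] fun y => ‖y - x‖ ^ 2 :=
    Asymptotics.IsBigO.of_bound C (Filter.Eventually.of_forall fun y => by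
      simpa using h y)
  refine hO.trans_isLittleO ?_
  have := Asymptotics.isLittleO_norm_pow_id (E' := EuclideanSpace ℝ (Fin n)) one_lt_two
  have ht : Filter.Tendsto (fun y => y - x) (nhds x) (nhds 0) := by
    simpa using (Continuous.tendsto (f := fun y => y - x) (by fun_prop) x)
  exact this.comp_tendsto ht

theorem stmt_3 {p₁ n : ℕ}
    (g : EuclideanSpace ℝ (Fin p₁) → ℝ) (domg : Set (EuclideanSpace ℝ (Fin p₁)))
    (hgconv : ConvexOn ℝ domg g) (hglsc : LowerSemicontinuousOn g domg)
    (hgne : domg.Nonempty)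
    (A : EuclideanSpace ℝ (Fin p₁) →L[ℝ] EuclideanSpace ℝ (Fin n))
    (ω : EuclideanSpace ℝ (Fin p₁) → ℝ) (ω' : EuclideanSpace ℝ (Fin p₁) → EuclideanSpace ℝ (Fin p₁))
    (hωgrad : ∀ x, HasGradientAt ω (ω' x) x)
    (hωsc : StrongConvexOn domg 1 ω)
    (Lb : ℝ) (hLb : 0 < Lb) (hωlip : LipschitzWith (Real.toNNReal Lb) ω')
    (uc : EuclideanSpace ℝ (Fin p₁)) (huc : uc ∈ domg)
    (gS : ℝ → EuclideanSpace ℝ (Fin p₁) → ℝ) (uS : ℝ → EuclideanSpace ℝ (Fin p₁) → EuclideanSpace ℝ (Fin p₁))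
    (hgS : ∀ γ : ℝ, 0 < γ → ∀ z : EuclideanSpace ℝ (Fin p₁),
      uS γ z ∈ domg ∧
      (∀ u ∈ domg, ⟪z, u⟫ - g u - γ * breg ω ω' u uc
        ≤ ⟪z, uS γ z⟫ - g (uS γ z) - γ * breg ω ω' (uS γ z) uc) ∧
      (∀ u ∈ domg, ⟪z, u⟫ - g u - γ * breg ω ω' u uc
        = ⟪z, uS γ z⟫ - g (uS γ z) - γ * breg ω ω' (uS γ z) uc → u = uS γ z) ∧
      gS γ z = ⟪z, uS γ z⟫ - g (uS γ z) - γ * breg ω ω' (uS γ z) uc)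
 :
    ∀ γ : ℝ, 0 < γ →
      (∀ lam : EuclideanSpace ℝ (Fin n), HasGradientAt (fun mu => gS γ ((ContinuousLinearMap.adjoint A) mu))
          (A (uS γ ((ContinuousLinearMap.adjoint A) lam))) lam) ∧
      (∀ lam lamhat : EuclideanSpace ℝ (Fin n),
        γ/2 * ‖uS γ ((ContinuousLinearMap.adjoint A) lam) - uS γ ((ContinuousLinearMap.adjoint A) lamhat)‖^2
          ≤ gS γ ((ContinuousLinearMap.adjoint A) lam) - gS γ ((ContinuousLinearMap.adjoint A) lamhat)
            - ⟪A (uS γ ((ContinuousLinearMap.adjoint A) lamhat)), lam - lamhat⟫ ∧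
        gS γ ((ContinuousLinearMap.adjoint A) lam) - gS γ ((ContinuousLinearMap.adjoint A) lamhat)
            - ⟪A (uS γ ((ContinuousLinearMap.adjoint A) lamhat)), lam - lamhat⟫
          ≤ ‖A‖^2/(2*γ) * ‖lam - lamhat‖^2) := by
  intro γ hγ
  have main : ∀ lam lamhat : EuclideanSpace ℝ (Fin n),
      γ/2 * ‖uS γ ((ContinuousLinearMap.adjoint A) lam) - uS γ ((ContinuousLinearMap.adjoint A) lamhat)‖^2
          ≤ gS γ ((ContinuousLinearMap.adjoint A) lam) - gS γ ((ContinuousLinearMap.adjoint A) lamhat)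
            - ⟪A (uS γ ((ContinuousLinearMap.adjoint A) lamhat)), lam - lamhat⟫ ∧
        gS γ ((ContinuousLinearMap.adjoint A) lam) - gS γ ((ContinuousLinearMap.adjoint A) lamhat)
            - ⟪A (uS γ ((ContinuousLinearMap.adjoint A) lamhat)), lam - lamhat⟫
          ≤ ‖A‖^2/(2*γ) * ‖lam - lamhat‖^2 := by
    intro lam lamhat
    obtain ⟨hu, humax, -, hval⟩ := hgS γ hγ (ContinuousLinearMap.adjoint A lam)
    obtain ⟨hv, hvmax, -, hvalhat⟩ := hgS γ hγ (ContinuousLinearMap.adjoint A lamhat)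
    rw [hval, hvalhat]
    generalize uS γ (ContinuousLinearMap.adjoint A lam) = u at *
    generalize uS γ (ContinuousLinearMap.adjoint A lamhat) = v at *
    have growth := quadratic_growth hgconv hωsc hγ hv hu humax
    have growthhat := quadratic_growth hgconv hωsc hγ hu hv hvmax
    rw [norm_sub_rev] at growth
    simp only [ContinuousLinearMap.adjoint_inner_left] at growth growthhat ⊢
    rw [real_inner_comm (lam - lamhat) (A v), inner_sub_left]
    refine ⟨by linarith, ?_⟩
    have hcs : ⟪lam - lamhat, A (u - v)⟫ ≤ ‖lam - lamhat‖ * (‖A‖ * ‖u - v‖) :=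
      (real_inner_le_norm _ _).trans
        (mul_le_mul_of_nonneg_left (A.le_opNorm _) (norm_nonneg _))
    rw [map_sub, inner_sub_right, inner_sub_left, inner_sub_left] at hcs
    have young : ‖lam - lamhat‖ * (‖A‖ * ‖u - v‖)
        ≤ ‖A‖^2/(2*γ) * ‖lam - lamhat‖^2 + γ / 2 * ‖u - v‖ ^ 2 := by
      have hsq : ‖A‖^2/(2*γ) * ‖lam - lamhat‖^2 + γ / 2 * ‖u - v‖ ^ 2
          - ‖lam - lamhat‖ * (‖A‖ * ‖u - v‖)
          = (‖A‖ * ‖lam - lamhat‖ - γ * ‖u - v‖) ^ 2 / (2 * γ) := by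
        field_simp
        ring
      have : 0 ≤ (‖A‖ * ‖lam - lamhat‖ - γ * ‖u - v‖) ^ 2 / (2 * γ) := by positivity
      linarith
    linarith
  refine ⟨fun lam => hasGradientAt_of_quadratic_bound (C := ‖A‖^2/(2*γ)) fun mu => ?_, main⟩
  obtain ⟨hlow, hup⟩ := main mu lam
  rw [abs_of_nonneg (le_trans (by positivity) hlow)]
  exact hup
end
end

section
/- Let k ≥ 0 and suppose (ūᵏ, v̄ᵏ, λ̄ᵏ) ∈ dom g × dom h × ℝⁿ and the next iterate is generated as follows: λ*_k := (1/β_k)(c − Aūᵏ − Bv̄ᵏ); λ̂ᵏ := (1−τ_k)λ̄ᵏ + τ_k λ*_k; ûᵏ⁺¹ minimizes u ↦ g(u) − ⟨Aᵀλ̂ᵏ, u⟩ + γ_{k+1} b(u, ū_c); v̂ᵏ⁺¹ minimizes v ↦ h(v) − ⟨Bᵀλ̂ᵏ, v⟩ + (η_k/2)‖Aûᵏ⁺¹ + Bv − c‖²; λ̄ᵏ⁺¹ := λ̂ᵏ − η_k(Aûᵏ⁺¹ + Bv̂ᵏ⁺¹ − c); and (ūᵏ⁺¹, v̄ᵏ⁺¹)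 := (1−τ_k)(ūᵏ, v̄ᵏ) + τ_k(ûᵏ⁺¹, v̂ᵏ⁺¹). If τ_k ∈ (0,1] and γ_k, γ_{k+1}, β_k, β_{k+1}, η_k > 0 satisfy (1 + L_b⁻¹τ_k)γ_{k+1} ≥ γ_k, β_{k+1} ≥ (1−τ_k)β_k, (1−τ_k²)γ_{k+1}β_k ≥ 2‖A‖²τ_k², and 2‖A‖²η_k = γ_{k+1}, then G_{γ_{k+1},β_{k+1}}(w̄ᵏ⁺¹) ≤ (1−τ_k)·G_{γ_k,β_k}(w̄ᵏ) + (η_kτ_k²/4)·D_f², where w̄ᵏ = (ūᵏ, v̄ᵏ, λ̄ᵏ). -/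
/-!
Write `r = A uhat + B vhat - c`. The one-step decrease of the smoothed gap combines two upper bounds
for the smoothed dual at `lambarp`. Both start from the smoothness of the smoothed conjugate,
itself a consequence of quadratic growth of strongly convex problems (`breg_growth`), and from the
optimality condition `Bᵀ lambarp ∈ ∂h(vhat)` (`prox_opt`). The first bound compares with the
smoothed dual at `lambar` and keeps a quadratic term `‖uhat - ustar‖²`, where `ustar` is the
smoothed maximizer at `lambar`; the second compares with `-g uhat - h vhat`. Averaging them with
weights `1 - τ` and `τ`, the term linear in `r` becomes `τ ⟪lamstark, r⟫`, which cancels the cross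
term of the squared residual at the new averaged point.

What remains splits into two independent pieces. The Bregman piece is nonpositive because
`‖·‖²/2 ≤ b(·, uc) ≤ Lb ‖·‖²/2` and
`τ ‖e‖² + (1 - τ) ‖e - a‖² = ‖e - (1 - τ) a‖² + τ (1 - τ) ‖a‖²`.
The residual piece is `(τ² / (2 (1 - τ) β) - 3 η / 4) ‖r‖²`, at most
`((1 + τ) η / 2 - 3 η / 4) ‖r‖² ≤ η τ² / 4 ‖r‖²` by the parameter conditions and `(1 - τ)² ≥ 0`.
-/


open scoped RealInnerProductSpace

noncomputable section

/-! ### Bregman distances and optimality of the subproblems -/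

lemma nonpos_of_le_mul {a b : ℝ} (H : ∀ t : ℝ, 0 < t → t < 1 → a ≤ t * b) : a ≤ 0 := by
  by_contra! ha
  have hb : 0 < b := by
    have := H (1/2) (by norm_num) (by norm_num)
    linarith
  have h1 := H (min (1/2) (a / (2 * b))) (by positivity)
    (lt_of_le_of_lt (min_le_left _ _) (by norm_num))
  have h2 : min (1/2) (a / (2 * b)) * b ≤ a / (2 * b) * b :=
    mul_le_mul_of_nonneg_right (min_le_right _ _) hb.le
  have h3 : a / (2 * b) * b = a / 2 := by field_simp
  linarith

/-- The restriction of `ω` to a line through `x` is differentiable with the expected derivative. -/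
lemma hasDerivAt_line {p : ℕ} {ω : EuclideanSpace ℝ (Fin p) → ℝ}
    {ω' : EuclideanSpace ℝ (Fin p) → EuclideanSpace ℝ (Fin p)}
    (hω : ∀ x, HasGradientAt ω (ω' x) x) (x d : EuclideanSpace ℝ (Fin p)) (t : ℝ) :
    HasDerivAt (fun s : ℝ => ω (x + s • d)) ⟪ω' (x + t • d), d⟫ t := by
  have h1 : HasDerivAt (fun s : ℝ => x + s • d) d t := by
    simpa using ((hasDerivAt_id t).smul_const d).const_add x
  have h2 := (hω (x + t • d)).hasFDerivAt.comp_hasDerivAt t h1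
  simp only [InnerProductSpace.toDual_apply_apply] at h2
  exact h2

/-- Lower quadratic bound on the Bregman distance, from strong convexity of `ω`. -/
lemma breg_lower {p : ℕ} {ω : EuclideanSpace ℝ (Fin p) → ℝ}
    {ω' : EuclideanSpace ℝ (Fin p) → EuclideanSpace ℝ (Fin p)}
    {s : Set (EuclideanSpace ℝ (Fin p))}
    (hω : ∀ x, HasGradientAt ω (ω' x) x) (hsc : StrongConvexOn s 1 ω)
    {x u : EuclideanSpace ℝ (Fin p)} (hx : x ∈ s) (hu : u ∈ s) :
    1 / 2 * ‖u - x‖ ^ 2 ≤ breg ω ω' u x := by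
  have hd := hasDerivAt_line hω x (u - x) 0
  simp only [zero_smul, add_zero] at hd
  have hs := hd.tendsto_slope_zero_right
  have hl : Filter.Tendsto (fun t : ℝ => ω u - ω x - (1 - t) * (1 / 2 * ‖u - x‖ ^ 2))
      (nhdsWithin 0 (Set.Ioi 0)) (nhds (ω u - ω x - (1 - 0) * (1 / 2 * ‖u - x‖ ^ 2))) := by
    apply Filter.Tendsto.mono_left _ nhdsWithin_le_nhds
    apply Continuous.tendsto
    fun_prop
  have hle := le_of_tendsto_of_tendsto hs hl (by
    filter_upwards [Ioo_mem_nhdsGT (zero_lt_one (α := ℝ))] with t ht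
    have h1 := hsc.2 hx hu (show (0 : ℝ) ≤ 1 - t by linarith [ht.2]) ht.1.le (by ring)
    have e : (1 - t) • x + t • u = x + t • (u - x) := by module
    rw [e, norm_sub_rev x u] at h1
    simp only [smul_eq_mul] at h1
    simp only [zero_add, zero_smul, add_zero, smul_eq_mul]
    rw [inv_mul_le_iff₀ ht.1]
    linarith)
  unfold breg
  linarith

/-- Upper quadratic bound on the Bregman distance, from the Lipschitz gradient of `ω`. -/
lemma breg_upper {p : ℕ} {ω : EuclideanSpace ℝ (Fin p) → ℝ}
    {ω' : EuclideanSpace ℝ (Fin p) → EuclideanSpace ℝ (Fin p)} {L : ℝ} (hL : 0 < L)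
    (hω : ∀ x, HasGradientAt ω (ω' x) x) (hlip : LipschitzWith (Real.toNNReal L) ω')
    (x u : EuclideanSpace ℝ (Fin p)) :
    breg ω ω' u x ≤ L / 2 * ‖u - x‖ ^ 2 := by
  set d := u - x with hd
  have hder : ∀ t : ℝ, HasDerivAt
      (fun s : ℝ => ω (x + s • d) - s * ⟪ω' x, d⟫ - L / 2 * ‖d‖ ^ 2 * s ^ 2)
      (⟪ω' (x + t • d), d⟫ - ⟪ω' x, d⟫ - L * ‖d‖ ^ 2 * t) t := by
    intro t
    have h1 := ((hasDerivAt_line hω x d t).sub ((hasDerivAt_id' t).mul_const ⟪ω' x, d⟫)).sub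
      ((hasDerivAt_pow 2 t).const_mul (L / 2 * ‖d‖ ^ 2))
    refine h1.congr_deriv ?_
    norm_num
    ring
  have hanti : AntitoneOn
      (fun s : ℝ => ω (x + s • d) - s * ⟪ω' x, d⟫ - L / 2 * ‖d‖ ^ 2 * s ^ 2) (Set.Icc 0 1) := by
    apply antitoneOn_of_deriv_nonpos (convex_Icc 0 1)
    · exact fun t _ => (hder t).continuousAt.continuousWithinAt
    · exact fun t _ => (hder t).differentiableAt.differentiableWithinAt
    · intro t ht
      rw [interior_Icc] at ht
      rw [(hder t).deriv, ← inner_sub_left]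
      have h1 := hlip.dist_le_mul (x + t • d) x
      rw [dist_eq_norm, dist_eq_norm, add_sub_cancel_left, norm_smul, Real.norm_eq_abs,
        abs_of_pos ht.1, Real.coe_toNNReal _ hL.le] at h1
      have h2 := real_inner_le_norm (ω' (x + t • d) - ω' x) d
      nlinarith [norm_nonneg d, mul_le_mul_of_nonneg_right h1 (norm_nonneg d)]
  have h01 := hanti (Set.left_mem_Icc.2 zero_le_one) (Set.right_mem_Icc.2 zero_le_one) zero_le_one
  have e : x + d = u := by rw [hd]; abel
  simp only [one_smul, zero_smul, add_zero, e] at h01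
  unfold breg
  rw [← hd]
  linarith

/-- Quadratic growth of the smoothed subproblem around its minimizer. -/
lemma breg_growth {p : ℕ} {g ω : EuclideanSpace ℝ (Fin p) → ℝ}
    {ω' : EuclideanSpace ℝ (Fin p) → EuclideanSpace ℝ (Fin p)}
    {s : Set (EuclideanSpace ℝ (Fin p))} (hg : ConvexOn ℝ s g) (hsc : StrongConvexOn s 1 ω)
    {γ : ℝ} (hγ : 0 < γ) {z x y u : EuclideanSpace ℝ (Fin p)} (hy : y ∈ s) (hu : u ∈ s)
    (hmin : ∀ u ∈ s, g y - ⟪z, y⟫ + γ * breg ω ω' y x ≤ g u - ⟪z, u⟫ + γ * breg ω ω' u x) :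
    g y - ⟪z, y⟫ + γ * breg ω ω' y x + γ / 2 * ‖u - y‖ ^ 2
      ≤ g u - ⟪z, u⟫ + γ * breg ω ω' u x := by
  suffices H : g y - ⟪z, y⟫ + γ * breg ω ω' y x + γ / 2 * ‖u - y‖ ^ 2
      - (g u - ⟪z, u⟫ + γ * breg ω ω' u x) ≤ 0 by linarith
  apply nonpos_of_le_mul (b := γ / 2 * ‖u - y‖ ^ 2)
  intro t ht0 ht1
  have hmem := hg.1 hy hu (show (0 : ℝ) ≤ 1 - t by linarith) ht0.le (by ring)
  have h0 := hmin _ hmem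
  have h1 := hsc.2 hy hu (show (0 : ℝ) ≤ 1 - t by linarith) ht0.le (by ring)
  have h2 := hg.2 hy hu (show (0 : ℝ) ≤ 1 - t by linarith) ht0.le (by ring)
  rw [norm_sub_rev y u] at h1
  have h1' := mul_le_mul_of_nonneg_left h1 hγ.le
  simp only [smul_eq_mul, breg, inner_sub_right, inner_add_right, inner_smul_right]
    at h0 h1' h2 ⊢
  refine le_of_mul_le_mul_left ?_ ht0
  linarith

/-- First-order optimality for a convex function plus a quadratic: `y` is a maximizer in the
conjugate of `h` at the shifted slope. -/
lemma prox_opt {p n : ℕ} {h : EuclideanSpace ℝ (Fin p) → ℝ} {s : Set (EuclideanSpace ℝ (Fin p))}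
    (hh : ConvexOn ℝ s h) (B : EuclideanSpace ℝ (Fin p) →L[ℝ] EuclideanSpace ℝ (Fin n))
    {η : ℝ} {q l : EuclideanSpace ℝ (Fin n)} {y v : EuclideanSpace ℝ (Fin p)}
    (hy : y ∈ s) (hv : v ∈ s)
    (hmin : ∀ v ∈ s, h y - ⟪l, B y⟫ + η / 2 * ‖q + B y‖ ^ 2
      ≤ h v - ⟪l, B v⟫ + η / 2 * ‖q + B v‖ ^ 2) :
    ⟪l - η • (q + B y), B v⟫ - h v ≤ ⟪l - η • (q + B y), B y⟫ - h y := by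
  suffices H : (⟪l - η • (q + B y), B v⟫ - h v) - (⟪l - η • (q + B y), B y⟫ - h y) ≤ 0 by
    linarith
  apply nonpos_of_le_mul (b := η / 2 * ‖B v - B y‖ ^ 2)
  intro t ht0 ht1
  have h0 := hmin _ (hh.1 hy hv (show (0 : ℝ) ≤ 1 - t by linarith) ht0.le (by ring))
  have h2 := hh.2 hy hv (show (0 : ℝ) ≤ 1 - t by linarith) ht0.le (by ring)
  have e : q + B ((1 - t) • y + t • v) = (q + B y) + t • (B v - B y) := by
    simp only [map_add, map_smul]
    module
  have e2 : B ((1 - t) • y + t • v) = B y + t • (B v - B y) := by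
    simp only [map_add, map_smul]
    module
  rw [e, e2, norm_add_sq_real (q + B y), norm_smul, mul_pow, Real.norm_eq_abs, sq_abs] at h0
  generalize q + B y = r at *
  simp only [smul_eq_mul, inner_sub_left, inner_sub_right, inner_add_right, inner_smul_right,
    inner_smul_left, RCLike.conj_to_real] at h0 h2 ⊢
  refine le_of_mul_le_mul_left ?_ ht0
  linarith

/-! ### One-step decrease of the smoothed gap -/

set_option maxHeartbeats 1000000

theorem stmt_6 {p₁ p₂ n : ℕ}
    (g : EuclideanSpace ℝ (Fin p₁) → ℝ) (domg : Set (EuclideanSpace ℝ (Fin p₁)))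
    (h : EuclideanSpace ℝ (Fin p₂) → ℝ) (domh : Set (EuclideanSpace ℝ (Fin p₂)))
    (A : EuclideanSpace ℝ (Fin p₁) →L[ℝ] EuclideanSpace ℝ (Fin n))
    (B : EuclideanSpace ℝ (Fin p₂) →L[ℝ] EuclideanSpace ℝ (Fin n))
    (c : EuclideanSpace ℝ (Fin n))
    (hgconv : ConvexOn ℝ domg g) (hglsc : LowerSemicontinuousOn g domg)
    (hgne : domg.Nonempty)
    (hhconv : ConvexOn ℝ domh h) (hhlsc : LowerSemicontinuousOn h domh)
    (hhne : domh.Nonempty)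
    (hstar : EuclideanSpace ℝ (Fin p₂) → ℝ)
    (hhstar : ∀ z, IsLUB ((fun v => ⟪z, v⟫ - h v) '' domh) (hstar z))
    (ω : EuclideanSpace ℝ (Fin p₁) → ℝ) (ω' : EuclideanSpace ℝ (Fin p₁) → EuclideanSpace ℝ (Fin p₁))
    (hωgrad : ∀ x, HasGradientAt ω (ω' x) x)
    (hωsc : StrongConvexOn domg 1 ω)
    (Lb : ℝ) (hLb : 0 < Lb) (hωlip : LipschitzWith (Real.toNNReal Lb) ω')
    (uc : EuclideanSpace ℝ (Fin p₁)) (huc : uc ∈ domg)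
    (gS : ℝ → EuclideanSpace ℝ (Fin p₁) → ℝ) (uS : ℝ → EuclideanSpace ℝ (Fin p₁) → EuclideanSpace ℝ (Fin p₁))
    (hgS : ∀ γ : ℝ, 0 < γ → ∀ z : EuclideanSpace ℝ (Fin p₁),
      uS γ z ∈ domg ∧
      (∀ u ∈ domg, ⟪z, u⟫ - g u - γ * breg ω ω' u uc
        ≤ ⟪z, uS γ z⟫ - g (uS γ z) - γ * breg ω ω' (uS γ z) uc) ∧
      (∀ u ∈ domg, ⟪z, u⟫ - g u - γ * breg ω ω' u uc
        = ⟪z, uS γ z⟫ - g (uS γ z) - γ * breg ω ω' (uS γ z) uc → u = uS γ z) ∧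
      gS γ z = ⟪z, uS γ z⟫ - g (uS γ z) - γ * breg ω ω' (uS γ z) uc)
    (dG : ℝ → EuclideanSpace ℝ (Fin n) → ℝ)
    (hdG : ∀ γ lam, dG γ lam = gS γ ((ContinuousLinearMap.adjoint A) lam) + hstar ((ContinuousLinearMap.adjoint B) lam) - ⟪c, lam⟫)
    (G : ℝ → ℝ → EuclideanSpace ℝ (Fin p₁) → EuclideanSpace ℝ (Fin p₂) → EuclideanSpace ℝ (Fin n) → ℝ)
    (hGdef : ∀ γ β u v lam, G γ β u v lam
      = g u + h v + 1/(2*β) * ‖A u + B v - c‖^2 + dG γ lam)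
    (Df : ℝ)
    (hDf : IsLUB {r : ℝ | ∃ u ∈ domg, ∃ v ∈ domh, r = ‖A u + B v - c‖} Df)
    (ubar : EuclideanSpace ℝ (Fin p₁)) (vbar : EuclideanSpace ℝ (Fin p₂)) (lambar : EuclideanSpace ℝ (Fin n))
    (hubar : ubar ∈ domg) (hvbar : vbar ∈ domh)
    (τ γ γp β βp η : ℝ)
    (hτ : τ ∈ Set.Ioc (0:ℝ) 1)
    (hγ : 0 < γ) (hγp : 0 < γp) (hβ : 0 < β) (hβp : 0 < βp) (hηpos : 0 < η)
    (hc1 : (1 + Lb⁻¹ * τ) * γp ≥ γ)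
    (hc2 : βp ≥ (1 - τ) * β)
    (hc3 : (1 - τ^2) * γp * β ≥ 2 * ‖A‖^2 * τ^2)
    (hc4 : 2 * ‖A‖^2 * η = γp)
    (lamstark lamhat : EuclideanSpace ℝ (Fin n)) (uhat : EuclideanSpace ℝ (Fin p₁)) (vhat : EuclideanSpace ℝ (Fin p₂))
    (ubarp : EuclideanSpace ℝ (Fin p₁)) (vbarp : EuclideanSpace ℝ (Fin p₂)) (lambarp : EuclideanSpace ℝ (Fin n))
    (hlamstark : lamstark = β⁻¹ • (c - A ubar - B vbar))
    (hlamhat : lamhat = (1 - τ) • lambar + τ • lamstark)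
    (huhat : uhat ∈ domg ∧ ∀ u ∈ domg,
      g uhat - ⟪(ContinuousLinearMap.adjoint A) lamhat, uhat⟫ + γp * breg ω ω' uhat uc
        ≤ g u - ⟪(ContinuousLinearMap.adjoint A) lamhat, u⟫ + γp * breg ω ω' u uc)
    (hvhat : vhat ∈ domh ∧ ∀ v ∈ domh,
      h vhat - ⟪(ContinuousLinearMap.adjoint B) lamhat, vhat⟫ + η/2 * ‖A uhat + B vhat - c‖^2
        ≤ h v - ⟪(ContinuousLinearMap.adjoint B) lamhat, v⟫ + η/2 * ‖A uhat + B v - c‖^2)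
    (hlambarp : lambarp = lamhat - η • (A uhat + B vhat - c))
    (hubarp : ubarp = (1 - τ) • ubar + τ • uhat)
    (hvbarp : vbarp = (1 - τ) • vbar + τ • vhat) :
    G γp βp ubarp vbarp lambarp ≤ (1 - τ) * G γ β ubar vbar lambar + η * τ^2/4 * Df^2 := by
  obtain ⟨hτ0, hτ1⟩ := hτ
  have hA : 0 < ‖A‖ ^ 2 := by
    by_contra! hA
    nlinarith
  -- At `τ = 1` the third parameter condition would force `A = 0`.
  have hτlt : τ < 1 := by
    rcases hτ1.lt_or_eq with h1 | h1
    · exact h1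
    · subst h1
      nlinarith
  have hητ : τ ^ 2 ≤ (1 - τ ^ 2) * η * β := by
    rw [← hc4] at hc3
    refine le_of_mul_le_mul_left ?_ (mul_pos two_pos hA)
    linarith
  obtain ⟨huh, humin⟩ := huhat
  obtain ⟨hvh, hvmin⟩ := hvhat
  set r := A uhat + B vhat - c with hr
  set rb := A ubar + B vbar - c with hrb
  simp only [ContinuousLinearMap.adjoint_inner_left] at hvmin
  -- `Bᵀ lambarp` is a subgradient of `h` at `vhat`.
  have hvopt : ∀ v ∈ domh, ⟪lambarp, B v⟫ - h v ≤ ⟪lambarp, B vhat⟫ - h vhat := by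
    intro v hv
    have key := prox_opt hhconv B (η := η) (q := A uhat - c) (l := lamhat) hvh hv (by
      intro w hw
      have := hvmin w hw
      rwa [hr, add_sub_right_comm, add_sub_right_comm (A uhat) (B w) c] at this)
    have e : lamhat - η • (A uhat - c + B vhat) = lambarp := by
      rw [hlambarp, hr]; congr 2; abel
    rwa [e] at key
  have hhs : hstar ((ContinuousLinearMap.adjoint B) lambarp) ≤ ⟪lambarp, B vhat⟫ - h vhat := by
    apply (hhstar _).2
    rintro _ ⟨v, hv, rfl⟩
    simpa only [ContinuousLinearMap.adjoint_inner_left] using hvopt v hv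
  have hhs' : ⟪lambar, B vhat⟫ - h vhat ≤ hstar ((ContinuousLinearMap.adjoint B) lambar) := by
    have := (hhstar ((ContinuousLinearMap.adjoint B) lambar)).1 ⟨vhat, hvh, rfl⟩
    simpa only [ContinuousLinearMap.adjoint_inner_left] using this
  obtain ⟨hup, -, -, hupv⟩ := hgS γp hγp ((ContinuousLinearMap.adjoint A) lambarp)
  obtain ⟨hus, husmax, -, -⟩ := hgS γp hγp ((ContinuousLinearMap.adjoint A) lambar)
  obtain ⟨-, husmax', -, husv'⟩ := hgS γ hγ ((ContinuousLinearMap.adjoint A) lambar)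
  set up := uS γp ((ContinuousLinearMap.adjoint A) lambarp)
  set us := uS γp ((ContinuousLinearMap.adjoint A) lambar)
  -- Smoothness of the smoothed conjugate along the dual step.
  have hgp : gS γp ((ContinuousLinearMap.adjoint A) lambarp)
      ≤ ⟪lambarp, A uhat⟫ - g uhat - γp * breg ω ω' uhat uc + η / 4 * ‖r‖ ^ 2 := by
    have h1 := breg_growth hgconv hωsc hγp huh hup humin
    rw [hupv]
    simp only [ContinuousLinearMap.adjoint_inner_left] at h1 ⊢
    have h2 : ‖A up - A uhat‖ ^ 2 ≤ ‖A‖ ^ 2 * ‖up - uhat‖ ^ 2 := by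
      rw [← map_sub, ← mul_pow]
      exact pow_le_pow_left₀ (norm_nonneg _) (A.le_opNorm _) 2
    have h3 : η * ‖A up - A uhat‖ ^ 2 ≤ γp / 2 * ‖up - uhat‖ ^ 2 := by
      rw [← hc4]
      linarith [mul_le_mul_of_nonneg_left h2 hηpos.le]
    have h4 : 0 ≤ η * ‖(1 / 2 : ℝ) • r + (A up - A uhat)‖ ^ 2 := by positivity
    rw [norm_add_sq_real, norm_smul, mul_pow] at h4
    rw [hlambarp]
    simp only [inner_sub_left, inner_sub_right, inner_smul_left, RCLike.conj_to_real] at h4 ⊢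
    norm_num at h4
    linarith
  -- Growth of the subproblem at `lambar` around its maximizer `us`, tested at `uhat`.
  have hgl := breg_growth hgconv hωsc hγp (x := uc) (ω' := ω')
    (z := (ContinuousLinearMap.adjoint A) lambar) hus huh
    (fun u hu => by linarith [husmax u hu])
  have hgs := husmax' us hus
  have hbu := breg_upper hLb hωgrad hωlip uc us
  have hbl := breg_lower hωgrad hωsc huc huh
  have hbl0 := breg_lower hωgrad hωsc huc hus
  rw [← husv'] at hgs
  simp only [ContinuousLinearMap.adjoint_inner_left] at hgl hgs
  rw [norm_sub_rev uhat us] at hgl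
  have hbreg : (1 - τ) * ((γ - γp) * breg ω ω' us uc) - τ * (γp * breg ω ω' uhat uc)
      - (1 - τ) * (γp / 2 * ‖us - uhat‖ ^ 2) ≤ 0 := by
    have hbn : 0 ≤ breg ω ω' us uc := le_trans (by positivity) hbl0
    have h1 : (γ - γp) * breg ω ω' us uc ≤ τ * γp / 2 * ‖us - uc‖ ^ 2 := by
      calc (γ - γp) * breg ω ω' us uc ≤ (Lb⁻¹ * τ * γp) * breg ω ω' us uc := by
            apply mul_le_mul_of_nonneg_right _ hbn
            linarith
        _ ≤ (Lb⁻¹ * τ * γp) * (Lb / 2 * ‖us - uc‖ ^ 2) :=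
            mul_le_mul_of_nonneg_left hbu (by positivity)
        _ = τ * γp / 2 * ‖us - uc‖ ^ 2 := by field_simp
    have h2 := mul_le_mul_of_nonneg_left h1 (sub_nonneg.2 hτ1)
    have h3 := mul_le_mul_of_nonneg_left hbl (mul_pos hτ0 hγp).le
    have h4 : 0 ≤ γp / 2 * ‖(uhat - uc) - (1 - τ) • (us - uc)‖ ^ 2 := by positivity
    have e : us - uhat = (us - uc) - (uhat - uc) := by abel
    rw [e, norm_sub_sq_real, real_inner_comm]
    rw [norm_sub_sq_real, norm_smul, mul_pow, Real.norm_eq_abs, sq_abs, inner_smul_right] at h4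
    linarith
  -- Averaging the primal iterates: convexity and expansion of the squared residual.
  have hgc : g ubarp ≤ (1 - τ) * g ubar + τ * g uhat := by
    rw [hubarp]
    exact hgconv.2 hubar huh (sub_nonneg.2 hτ1) hτ0.le (by ring)
  have hhc : h vbarp ≤ (1 - τ) * h vbar + τ * h vhat := by
    rw [hvbarp]
    exact hhconv.2 hvbar hvh (sub_nonneg.2 hτ1) hτ0.le (by ring)
  have hrp : A ubarp + B vbarp - c = (1 - τ) • rb + τ • r := by
    rw [hubarp, hvbarp, hr, hrb]
    simp only [map_add, map_smul]
    module
  have hls : lamstark = -(β⁻¹ • rb) := by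
    rw [hlamstark, hrb, ← smul_neg]; congr 1; abel
  have h1τ : 0 < 1 - τ := sub_pos.2 hτlt
  have hquad : 1 / (2 * βp) * ‖A ubarp + B vbarp - c‖ ^ 2
      ≤ (1 - τ) * (1 / (2 * β) * ‖rb‖ ^ 2) - τ * ⟪lamstark, r⟫ + (1 + τ) * η / 2 * ‖r‖ ^ 2 := by
    have h1 : 1 / (2 * βp) ≤ 1 / (2 * ((1 - τ) * β)) :=
      one_div_le_one_div_of_le (by positivity) (by linarith)
    have h2 : τ ^ 2 / (2 * ((1 - τ) * β)) ≤ (1 + τ) * η / 2 := by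
      rw [div_le_iff₀ (by positivity)]
      linarith
    have h3 := mul_le_mul_of_nonneg_right h2 (sq_nonneg ‖r‖)
    refine (mul_le_mul_of_nonneg_right h1 (sq_nonneg _)).trans ?_
    rw [hrp, norm_add_sq_real, norm_smul, norm_smul, mul_pow, mul_pow, Real.norm_eq_abs,
      Real.norm_eq_abs, sq_abs, sq_abs, hls]
    simp only [inner_neg_left, inner_smul_left, inner_smul_right, RCLike.conj_to_real]
    have e : 1 / (2 * ((1 - τ) * β)) * ((1 - τ) ^ 2 * ‖rb‖ ^ 2
        + 2 * (τ * ((1 - τ) * ⟪rb, r⟫)) + τ ^ 2 * ‖r‖ ^ 2)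
        = (1 - τ) * (1 / (2 * β) * ‖rb‖ ^ 2) + τ * (β⁻¹ * ⟪rb, r⟫)
          + τ ^ 2 / (2 * ((1 - τ) * β)) * ‖r‖ ^ 2 := by
      field_simp
    linarith
  have hrD : ‖r‖ ^ 2 ≤ Df ^ 2 :=
    pow_le_pow_left₀ (norm_nonneg _) (hDf.1 ⟨uhat, huh, vhat, hvh, rfl⟩) 2
  have hfin : ((1 + τ) * η / 2 - 3 * η / 4) * ‖r‖ ^ 2 ≤ η * τ ^ 2 / 4 * Df ^ 2 := by
    calc ((1 + τ) * η / 2 - 3 * η / 4) * ‖r‖ ^ 2 ≤ η * τ ^ 2 / 4 * ‖r‖ ^ 2 := by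
          apply mul_le_mul_of_nonneg_right _ (sq_nonneg _)
          nlinarith [mul_nonneg hηpos.le (sq_nonneg (1 - τ))]
      _ ≤ η * τ ^ 2 / 4 * Df ^ 2 := mul_le_mul_of_nonneg_left hrD (by positivity)
  have hrin : ∀ l : EuclideanSpace ℝ (Fin n), ⟪l, r⟫ = ⟪l, A uhat⟫ + ⟪l, B vhat⟫ - ⟪c, l⟫ := by
    intro l
    rw [hr, inner_sub_right, inner_add_right, real_inner_comm c l]
  have hd1 : dG γp lambarp ≤ dG γ lambar + (γ - γp) * breg ω ω' us uc
      - γp / 2 * ‖us - uhat‖ ^ 2 - ⟪lambar, r⟫ + ⟪lambarp, r⟫ + η / 4 * ‖r‖ ^ 2 := by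
    rw [hdG, hdG, hrin, hrin]
    linarith
  have hd2 : dG γp lambarp ≤ - g uhat - h vhat - γp * breg ω ω' uhat uc + ⟪lambarp, r⟫
      + η / 4 * ‖r‖ ^ 2 := by
    rw [hdG, hrin]
    linarith
  -- With weights `1 - τ` and `τ`, the terms linear in `r` collapse to `τ ⟪lamstark, r⟫`.
  have hlin : ⟪lambarp, r⟫ - (1 - τ) * ⟪lambar, r⟫ = τ * ⟪lamstark, r⟫ - η * ‖r‖ ^ 2 := by
    rw [hlambarp, hlamhat]
    simp only [inner_sub_left, inner_add_left, inner_smul_left, RCLike.conj_to_real,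
      real_inner_self_eq_norm_sq]
    ring
  have hd1' := mul_le_mul_of_nonneg_left hd1 h1τ.le
  have hd2' := mul_le_mul_of_nonneg_left hd2 hτ0.le
  rw [hGdef, hGdef]
  linarith
end
end

section
/- Let γ₁ > 0 and M > 0 (playing the role of ‖A‖²), and for every integer k ≥ 1 define τ_k := 3/(k+4), γ_k := 5γ₁/(k+4), β_k := 18M(k+5)/(5γ₁(k+1)(k+7)), and η_k := 5γ₁/(2M(k+5)). Then for every k ≥ 1: (1+τ_k)γ_{k+1} ≥ γ_k, β_{k+1} ≥ (1−τ_k)β_k, (1−τ_k²)γ_{k+1}β_k ≥ 2Mτ_k², 2Mη_k = γ_{k+1}, and β_k ≤ 18M/(5γ₁(k+1)). -/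
/-!
Writing `x` for the index `k`, each condition reduces to a rational-function identity for `x ≥ 0`.
For the first, second and last conditions, the difference of the two sides is put over a common
denominator, where it becomes a quotient with visibly nonnegative coefficients. The third and
fourth conditions are equalities; the third because `1 - τ² = (x+1)(x+7)/(x+4)²` cancels the
denominator of `β`.
-/

open scoped RealInnerProductSpace

noncomputable section

theorem stmt_8 (γ₁ M : ℝ) (hγ₁ : 0 < γ₁) (hM : 0 < M)
    (τ γ β η : ℕ → ℝ)
    (hτ : ∀ k : ℕ, τ k = 3/((k:ℝ)+4))
    (hγ : ∀ k : ℕ, γ k = 5*γ₁/((k:ℝ)+4))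
    (hβ : ∀ k : ℕ, β k = 18*M*((k:ℝ)+5)/(5*γ₁*((k:ℝ)+1)*((k:ℝ)+7)))
    (hη : ∀ k : ℕ, η k = 5*γ₁/(2*M*((k:ℝ)+5))) :
    ∀ k : ℕ, 1 ≤ k →
      (1 + τ k) * γ (k+1) ≥ γ k ∧
      β (k+1) ≥ (1 - τ k) * β k ∧
      (1 - (τ k)^2) * γ (k+1) * β k ≥ 2*M*(τ k)^2 ∧
      2*M*η k = γ (k+1) ∧
      β k ≤ 18*M/(5*γ₁*((k:ℝ)+1)) := by
  intro k _
  have hk : (0 : ℝ) ≤ k := k.cast_nonneg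
  rw [hτ, hγ, hγ, hβ, hβ, hη]
  push_cast
  generalize (k : ℝ) = x at hk
  refine ⟨?_, ?_, ?_, ?_, ?_⟩
  · have h : (1 + 3/(x+4)) * (5*γ₁/(x+1+4)) - 5*γ₁/(x+4) = 10*γ₁/((x+4)*(x+5)) := by
      rw [show x+1+4 = x+5 by ring]
      field_simp
      ring
    have h' : 0 ≤ 10*γ₁/((x+4)*(x+5)) := by positivity
    linarith
  · have h : 18*M*(x+1+5)/(5*γ₁*(x+1+1)*(x+1+7))
        - (1 - 3/(x+4)) * (18*M*(x+5)/(5*γ₁*(x+1)*(x+7)))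
        = 18*M*(2*x^2+28*x+88)/(5*γ₁*(x+2)*(x+8)*(x+4)*(x+7)) := by
      rw [show x+1+5 = x+6 by ring, show x+1+1 = x+2 by ring, show x+1+7 = x+8 by ring]
      field_simp
      ring
    have h' : 0 ≤ 18*M*(2*x^2+28*x+88)/(5*γ₁*(x+2)*(x+8)*(x+4)*(x+7)) := by positivity
    linarith
  · -- This condition holds with equality, since `1 - τ² = (x+1)(x+7)/(x+4)²`.
    apply ge_of_eq
    rw [show x+1+4 = x+5 by ring]
    field_simp
    ring
  · rw [show x+1+4 = x+5 by ring]
    field_simp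
  · have h : 18*M/(5*γ₁*(x+1)) - 18*M*(x+5)/(5*γ₁*(x+1)*(x+7))
        = 36*M/(5*γ₁*(x+1)*(x+7)) := by
      field_simp
      ring
    have h' : 0 ≤ 36*M/(5*γ₁*(x+1)*(x+7)) := by positivity
    linarith
end
end

section
/- Suppose g is in addition μ_g-strongly convex with μ_g > 0. Let k ≥ 0 and suppose (ūᵏ, v̄ᵏ, λ̄ᵏ) ∈ dom g × dom h × ℝⁿ and the next iterate is generated by: λ*_k := (1/β_k)(c − Aūᵏ − Bv̄ᵏ); λ̂ᵏ := (1−τ_k)λ̄ᵏ + τ_kλ*_k; ûᵏ⁺¹ minimizes u ↦ g(u) − ⟨Aᵀλ̂ᵏ, u⟩; v̂ᵏ⁺¹ minimizes v ↦ h(v) − ⟨Bᵀλ̂ᵏ, v⟩ + (η_k/2)‖Aûᵏ⁺¹ + Bv − c‖²; λ̄ᵏ⁺¹ := λ̂ᵏ − η_k(Aûᵏ⁺¹ + Bv̂ᵏ⁺¹ − c); (ūᵏ⁺¹, v̄ᵏ⁺¹) := (1−τ_k)(ūᵏ, v̄ᵏ) + τ_k(ûᵏ⁺¹, v̂ᵏ⁺¹).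 If τ_k ∈ (0,1), β_{k+1} ≥ (1−τ_k)β_k and η_k·( 3/2 + τ_k − ‖A‖²η_k/μ_g ) ≥ τ_k²/((1−τ_k)β_k), then G_{β_{k+1}}(w̄ᵏ⁺¹) ≤ (1−τ_k)·G_{β_k}(w̄ᵏ) + (τ_k²η_k/4)·D_f², where G_β(w) := f_β(x) + d(λ) and w̄ᵏ = (ūᵏ, v̄ᵏ, λ̄ᵏ). -/
/-!
Write `r = A û + B v̂ - c`, `r̄ = A ū + B v̄ - c`, `L = ‖A‖² / μg`, so that `λ̄⁺ = λ̂ - η r`.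

Strong convexity gives quadratic growth of `g - ⟪Aᵀλ̂, ·⟫` around its minimizer `û`, which is the
descent inequality of the `L`-smooth function `g* ∘ Aᵀ` at `λ̂` (`conj_descent`). First-order
optimality of `v̂` says `Bᵀλ̄⁺ ∈ ∂h(v̂)` (`prox_optimality`), which evaluates `h*(Bᵀλ̄⁺)`. Together
they give `d(λ̄⁺) ≤ ⟪λ̂, r⟫ - g û - h v̂ - (η - L η² / 2) ‖r‖²`, while Fenchel's inequality gives
`d(λ̄) ≥ ⟪λ̄, r⟫ - g û - h v̂`. On the primal side convexity is used for `g` and `h`, and the square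
`‖(1 - τ) r̄ + τ r‖² / (2 (1 - τ) β)` is expanded; its cross term `τ ⟪r̄, r⟫ / β` cancels
`τ ⟪λ*, r⟫`. What remains is `(τ² / (2 (1 - τ) β) - η + L η² / 2) ‖r‖²`, which the parameter
condition bounds by `η (τ / 2 - 1 / 4) ‖r‖² ≤ τ² η / 4 * Df²`, the last step being `(1 - τ)² ≥ 0`.
-/

open scoped RealInnerProductSpace

noncomputable section

/-- Passage to the limit `t → 0⁺` in the first-order optimality conditions. -/
lemma nonneg_of_forall_small {a b : ℝ} (H : ∀ t : ℝ, 0 < t → t < 1 → 0 ≤ a + t * b) : 0 ≤ a := by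
  by_contra! ha
  have hb : 0 < |b| + 1 := by positivity
  -- With `m = min (1/2) (-a / (2 (|b| + 1)))` one has `a + m b ≤ a / 2 < 0`.
  set m := min (1 / 2) (-a / (2 * (|b| + 1))) with hm
  have hm0 : 0 < m := lt_min (by norm_num) (div_pos (by linarith) (by positivity))
  have hm1 : m ≤ 1 / 2 := min_le_left _ _
  have hm2 : m * (2 * (|b| + 1)) ≤ -a := by
    rw [← le_div_iff₀ (by positivity)]
    exact min_le_right _ _
  have := H m hm0 (by linarith)
  nlinarith [mul_le_mul_of_nonneg_left (le_abs_self b) hm0.le]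

section

variable {E F : Type*} [NormedAddCommGroup E] [InnerProductSpace ℝ E]
  [NormedAddCommGroup F] [InnerProductSpace ℝ F]

/-- Quadratic growth of a tilted strongly convex function around its minimizer. -/
lemma quadratic_growth_s10 {s : Set E} {g : E → ℝ} {m : ℝ} (hg : StrongConvexOn s m g)
    {z x : E} (hx : x ∈ s) (hmin : ∀ u ∈ s, g x - ⟪z, x⟫ ≤ g u - ⟪z, u⟫) {u : E} (hu : u ∈ s) :
    g x - ⟪z, x⟫ + m / 2 * ‖u - x‖ ^ 2 ≤ g u - ⟪z, u⟫ := by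
  have key : 0 ≤ (g u - ⟪z, u⟫) - (g x - ⟪z, x⟫) - m / 2 * ‖u - x‖ ^ 2 := by
    refine nonneg_of_forall_small (b := m / 2 * ‖u - x‖ ^ 2) fun t ht0 ht1 => ?_
    have hconv := hg.2 hu hx ht0.le (by linarith : 0 ≤ 1 - t) (by ring)
    have hm := hmin _ (hg.1 hu hx ht0.le (by linarith : 0 ≤ 1 - t) (by ring))
    simp only [inner_add_right, real_inner_smul_right, smul_eq_mul] at hconv hm
    refine nonneg_of_mul_nonneg_right (a := t) ?_ ht0
    nlinarith
  linarith

/-- First-order optimality for a convex function plus the quadratic `η / 2 * ‖a + B v‖ ^ 2`. -/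
lemma prox_optimality {s : Set E} {h : E → ℝ} (hh : ConvexOn ℝ s h) (B : E →L[ℝ] F) (a : F)
    {η : ℝ} {z x : E} (hx : x ∈ s)
    (hmin : ∀ v ∈ s, h x - ⟪z, x⟫ + η / 2 * ‖a + B x‖ ^ 2 ≤ h v - ⟪z, v⟫ + η / 2 * ‖a + B v‖ ^ 2)
    {v : E} (hv : v ∈ s) :
    ⟪z, v⟫ - η * ⟪a + B x, B v⟫ - h v ≤ ⟪z, x⟫ - η * ⟪a + B x, B x⟫ - h x := by
  have key : 0 ≤ (⟪z, x⟫ - η * ⟪a + B x, B x⟫ - h x) - (⟪z, v⟫ - η * ⟪a + B x, B v⟫ - h v) := by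
    refine nonneg_of_forall_small (b := η / 2 * ‖B v - B x‖ ^ 2) fun t ht0 ht1 => ?_
    have hconv := hh.2 hv hx ht0.le (by linarith : 0 ≤ 1 - t) (by ring)
    have hm := hmin _ (hh.1 hv hx ht0.le (by linarith : 0 ≤ 1 - t) (by ring))
    have hsq : ‖a + B (t • v + (1 - t) • x)‖ ^ 2 = ‖a + B x‖ ^ 2
        + 2 * (t * (⟪a + B x, B v⟫ - ⟪a + B x, B x⟫)) + t ^ 2 * ‖B v - B x‖ ^ 2 := by
      have : a + B (t • v + (1 - t) • x) = (a + B x) + t • (B v - B x) := by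
        rw [map_add, map_smul, map_smul]; module
      rw [this, norm_add_sq_real, real_inner_smul_right, inner_sub_right, norm_smul, mul_pow,
        Real.norm_eq_abs, sq_abs]
    rw [hsq] at hm
    simp only [inner_add_right, real_inner_smul_right, smul_eq_mul] at hconv hm
    refine nonneg_of_mul_nonneg_right (a := t) ?_ ht0
    nlinarith
  linarith

/-- Descent inequality for `g* ∘ Aᵀ`, stated for each term of the supremum defining `g*`:
when `x` minimizes `g - ⟪Aᵀl, ·⟫`, the value of `g* ∘ Aᵀ` at `l` is `⟪l, A x⟫ - g x`, its gradient
there is `A x`, and `⟪l + δ, A x⟫ - g x` is the first-order expansion at `l + δ`. -/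
lemma conj_descent {g : E → ℝ} {m : ℝ} (hm : 0 < m) (A : E →L[ℝ] F) {l δ : F} {x u : E}
    (hgrow : g x - ⟪l, A x⟫ + m / 2 * ‖u - x‖ ^ 2 ≤ g u - ⟪l, A u⟫) :
    ⟪l + δ, A u⟫ - g u ≤ ⟪l + δ, A x⟫ - g x + ‖A‖ ^ 2 / m / 2 * ‖δ‖ ^ 2 := by
  have h1 : ⟪δ, A u⟫ - ⟪δ, A x⟫ ≤ ‖δ‖ * (‖A‖ * ‖u - x‖) := by
    rw [← inner_sub_right, ← map_sub]
    exact (real_inner_le_norm _ _).trans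
      (mul_le_mul_of_nonneg_left (A.le_opNorm _) (norm_nonneg _))
  -- Young's inequality with weight `m`.
  have h2 : ‖δ‖ * (‖A‖ * ‖u - x‖) ≤ m / 2 * ‖u - x‖ ^ 2 + ‖A‖ ^ 2 / m / 2 * ‖δ‖ ^ 2 := by
    have : m / 2 * ‖u - x‖ ^ 2 + ‖A‖ ^ 2 / m / 2 * ‖δ‖ ^ 2 - ‖δ‖ * (‖A‖ * ‖u - x‖)
        = (m * ‖u - x‖ - ‖A‖ * ‖δ‖) ^ 2 / (2 * m) := by
      field_simp; ring
    have h3 : 0 ≤ (m * ‖u - x‖ - ‖A‖ * ‖δ‖) ^ 2 / (2 * m) := by positivity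
    linarith
  rw [inner_add_left, inner_add_left]
  linarith

/-- The smoothing term at the averaged point: the cross term is exactly `-τ ⟪λ*, r⟫` with
`λ* = -r̄ / β`. -/
lemma smoothing_term_le {τ β βp : ℝ} (hτ1 : τ < 1) (hβ : 0 < β)
    (hc : (1 - τ) * β ≤ βp) (rb r : F) :
    1 / (2 * βp) * ‖(1 - τ) • rb + τ • r‖ ^ 2
      ≤ (1 - τ) * (1 / (2 * β) * ‖rb‖ ^ 2) + τ * (β⁻¹ * ⟪rb, r⟫)
        + τ ^ 2 / ((1 - τ) * β) / 2 * ‖r‖ ^ 2 := by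
  have h1 : 0 < 1 - τ := by linarith
  have h2 : 1 / (2 * βp) ≤ 1 / (2 * ((1 - τ) * β)) :=
    one_div_le_one_div_of_le (by positivity) (by linarith)
  refine (mul_le_mul_of_nonneg_right h2 (sq_nonneg _)).trans (le_of_eq ?_)
  rw [norm_add_sq_real, real_inner_smul_left, real_inner_smul_right, norm_smul, norm_smul, mul_pow,
    mul_pow, Real.norm_eq_abs, Real.norm_eq_abs, sq_abs, sq_abs]
  field_simp

end

theorem stmt_10 {p₁ p₂ n : ℕ}
    (g : EuclideanSpace ℝ (Fin p₁) → ℝ) (domg : Set (EuclideanSpace ℝ (Fin p₁)))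
    (h : EuclideanSpace ℝ (Fin p₂) → ℝ) (domh : Set (EuclideanSpace ℝ (Fin p₂)))
    (A : EuclideanSpace ℝ (Fin p₁) →L[ℝ] EuclideanSpace ℝ (Fin n))
    (B : EuclideanSpace ℝ (Fin p₂) →L[ℝ] EuclideanSpace ℝ (Fin n))
    (c : EuclideanSpace ℝ (Fin n))
    (hgconv : ConvexOn ℝ domg g) (hglsc : LowerSemicontinuousOn g domg)
    (hgne : domg.Nonempty)
    (hhconv : ConvexOn ℝ domh h) (hhlsc : LowerSemicontinuousOn h domh)
    (hhne : domh.Nonempty)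
    (gstar : EuclideanSpace ℝ (Fin p₁) → ℝ) (hstar : EuclideanSpace ℝ (Fin p₂) → ℝ)
    (hgstar : ∀ z, IsLUB ((fun u => ⟪z, u⟫ - g u) '' domg) (gstar z))
    (hhstar : ∀ z, IsLUB ((fun v => ⟪z, v⟫ - h v) '' domh) (hstar z))
    (d : EuclideanSpace ℝ (Fin n) → ℝ)
    (hd : ∀ lam, d lam = gstar ((ContinuousLinearMap.adjoint A) lam) + hstar ((ContinuousLinearMap.adjoint B) lam) - ⟪c, lam⟫)
    (Df : ℝ)
    (hDf : IsLUB {r : ℝ | ∃ u ∈ domg, ∃ v ∈ domh, r = ‖A u + B v - c‖} Df)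
    (μg : ℝ) (hμg : 0 < μg) (hgsc : StrongConvexOn domg μg g)
    (Gb : ℝ → EuclideanSpace ℝ (Fin p₁) → EuclideanSpace ℝ (Fin p₂) → EuclideanSpace ℝ (Fin n) → ℝ)
    (hGb : ∀ β u v lam, Gb β u v lam
      = g u + h v + 1/(2*β) * ‖A u + B v - c‖^2 + d lam)
    (ubar : EuclideanSpace ℝ (Fin p₁)) (vbar : EuclideanSpace ℝ (Fin p₂)) (lambar : EuclideanSpace ℝ (Fin n))
    (hubar : ubar ∈ domg) (hvbar : vbar ∈ domh)
    (τ β βp η : ℝ)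
    (hτ : τ ∈ Set.Ioo (0:ℝ) 1) (hβ : 0 < β) (hβp : 0 < βp) (hηpos : 0 < η)
    (hc1 : βp ≥ (1 - τ) * β)
    (hc2 : η * (3/2 + τ - ‖A‖^2 * η / μg) ≥ τ^2/((1 - τ) * β))
    (lamstark lamhat : EuclideanSpace ℝ (Fin n)) (uhat : EuclideanSpace ℝ (Fin p₁)) (vhat : EuclideanSpace ℝ (Fin p₂))
    (ubarp : EuclideanSpace ℝ (Fin p₁)) (vbarp : EuclideanSpace ℝ (Fin p₂)) (lambarp : EuclideanSpace ℝ (Fin n))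
    (hlamstark : lamstark = β⁻¹ • (c - A ubar - B vbar))
    (hlamhat : lamhat = (1 - τ) • lambar + τ • lamstark)
    (huhat : uhat ∈ domg ∧ ∀ u ∈ domg,
      g uhat - ⟪(ContinuousLinearMap.adjoint A) lamhat, uhat⟫ ≤ g u - ⟪(ContinuousLinearMap.adjoint A) lamhat, u⟫)
    (hvhat : vhat ∈ domh ∧ ∀ v ∈ domh,
      h vhat - ⟪(ContinuousLinearMap.adjoint B) lamhat, vhat⟫ + η/2 * ‖A uhat + B vhat - c‖^2
        ≤ h v - ⟪(ContinuousLinearMap.adjoint B) lamhat, v⟫ + η/2 * ‖A uhat + B v - c‖^2)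
    (hlambarp : lambarp = lamhat - η • (A uhat + B vhat - c))
    (hubarp : ubarp = (1 - τ) • ubar + τ • uhat)
    (hvbarp : vbarp = (1 - τ) • vbar + τ • vhat) :
    Gb βp ubarp vbarp lambarp ≤ (1 - τ) * Gb β ubar vbar lambar + τ^2 * η/4 * Df^2 := by
  obtain ⟨hτ0, hτ1⟩ := hτ
  obtain ⟨huh, humin⟩ := huhat
  obtain ⟨hvh, hvmin⟩ := hvhat
  have hτ' : 0 ≤ 1 - τ := by linarith
  set r := A uhat + B vhat - c with hr
  set rb := A ubar + B vbar - c with hrb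
  have hstark : lamstark = -(β⁻¹ • rb) := by rw [hlamstark, hrb]; module
  have hrp : A ubarp + B vbarp - c = (1 - τ) • rb + τ • r := by
    rw [hubarp, hvbarp, hr, hrb]; simp only [map_add, map_smul]; module
  have hg_up : gstar (ContinuousLinearMap.adjoint A lambarp)
      ≤ ⟪lambarp, A uhat⟫ - g uhat + ‖A‖ ^ 2 / μg / 2 * (η ^ 2 * ‖r‖ ^ 2) := by
    refine (hgstar _).2 ?_
    rintro _ ⟨u, hu, rfl⟩
    have hgrow := quadratic_growth_s10 hgsc huh humin hu
    simp only [ContinuousLinearMap.adjoint_inner_left] at hgrow ⊢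
    have := conj_descent hμg A (δ := -(η • r)) hgrow
    rwa [← sub_eq_add_neg, ← hlambarp, norm_neg, norm_smul, mul_pow, Real.norm_eq_abs,
      sq_abs] at this
  have hh_up : hstar (ContinuousLinearMap.adjoint B lambarp) ≤ ⟪lambarp, B vhat⟫ - h vhat := by
    refine (hhstar _).2 ?_
    rintro _ ⟨v, hv, rfl⟩
    have hcomm : ∀ w, A uhat + B w - c = (A uhat - c) + B w := fun w => by abel
    have hopt := prox_optimality hhconv B (A uhat - c) (η := η) hvh
      (fun w hw => by have := hvmin w hw; rwa [hr, hcomm, hcomm] at this) hv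
    rw [← hcomm, ← hr] at hopt
    simp only [ContinuousLinearMap.adjoint_inner_left] at hopt ⊢
    rw [hlambarp, inner_sub_left, inner_sub_left, real_inner_smul_left, real_inner_smul_left]
    linarith
  -- Fenchel's inequality at the old multiplier.
  have hg_lo : ⟪lambar, A uhat⟫ - g uhat ≤ gstar (ContinuousLinearMap.adjoint A lambar) := by
    have := (hgstar (ContinuousLinearMap.adjoint A lambar)).1 ⟨uhat, huh, rfl⟩
    simpa only [ContinuousLinearMap.adjoint_inner_left] using this
  have hh_lo : ⟪lambar, B vhat⟫ - h vhat ≤ hstar (ContinuousLinearMap.adjoint B lambar) := by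
    have := (hhstar (ContinuousLinearMap.adjoint B lambar)).1 ⟨vhat, hvh, rfl⟩
    simpa only [ContinuousLinearMap.adjoint_inner_left] using this
  have hinner : ∀ l, ⟪l, r⟫ = ⟪l, A uhat⟫ + ⟪l, B vhat⟫ - ⟪c, l⟫ := fun l => by
    rw [hr, inner_sub_right, inner_add_right, real_inner_comm l c]
  have hd_up : d lambarp
      ≤ ⟪lambarp, r⟫ - g uhat - h vhat + ‖A‖ ^ 2 / μg / 2 * (η ^ 2 * ‖r‖ ^ 2) := by
    rw [hd, hinner]; linarith
  have hd_lo : ⟪lambar, r⟫ - g uhat - h vhat ≤ d lambar := by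
    rw [hd, hinner]; linarith
  have hlamr : ⟪lambarp, r⟫
      = (1 - τ) * ⟪lambar, r⟫ - τ * (β⁻¹ * ⟪rb, r⟫) - η * ‖r‖ ^ 2 := by
    rw [hlambarp, hlamhat, hstark, inner_sub_left, inner_add_left, real_inner_smul_left,
      real_inner_smul_left, real_inner_smul_left, inner_neg_left, real_inner_smul_left,
      real_inner_self_eq_norm_sq]
    ring
  have hg_cv : g ubarp ≤ (1 - τ) * g ubar + τ * g uhat := by
    rw [hubarp]; exact hgconv.2 hubar huh hτ' hτ0.le (by ring)
  have hh_cv : h vbarp ≤ (1 - τ) * h vbar + τ * h vhat := by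
    rw [hvbarp]; exact hhconv.2 hvbar hvh hτ' hτ0.le (by ring)
  have hsm := smoothing_term_le hτ1 hβ hc1 rb r
  have hrD : ‖r‖ ^ 2 ≤ Df ^ 2 :=
    pow_le_pow_left₀ (norm_nonneg _) (hDf.1 ⟨uhat, huh, vhat, hvh, rfl⟩) 2
  have hcoef : τ ^ 2 / ((1 - τ) * β) / 2 - η + ‖A‖ ^ 2 / μg / 2 * η ^ 2 ≤ τ ^ 2 * η / 4 := by
    have he : ‖A‖ ^ 2 * η / μg = ‖A‖ ^ 2 / μg * η := by ring
    rw [he] at hc2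
    -- The slack is at least `η (1 - τ)² / 4`.
    nlinarith [mul_nonneg hηpos.le (sq_nonneg (1 - τ))]
  have hfin : (τ ^ 2 / ((1 - τ) * β) / 2 - η + ‖A‖ ^ 2 / μg / 2 * η ^ 2) * ‖r‖ ^ 2
      ≤ τ ^ 2 * η / 4 * Df ^ 2 :=
    (mul_le_mul_of_nonneg_right hcoef (sq_nonneg _)).trans
      (mul_le_mul_of_nonneg_left hrD (by positivity))
  have hd_lo' := mul_le_mul_of_nonneg_left hd_lo hτ'
  rw [hGb, hGb, hrp, ← hrb]
  linarith
end
end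

section
/- Suppose g is in addition μ_g-strongly convex with μ_g > 0, ‖A‖ > 0, and (u⋆, v⋆, λ⋆) is a KKT point with f⋆ = f(u⋆,v⋆) = −d(λ⋆). Run the strongly convex SAMA variant: initialize λ̂⁰ := 0, ū¹ := argmin_u { g(u) − ⟨Aᵀλ̂⁰, u⟩ }, v̄¹ := argmin_v { h(v) − ⟨Bᵀλ̂⁰, v⟩ + (η₀/2)‖Aū¹ + Bv − c‖² } with η₀ := μ_g/(2‖A‖²), λ̄¹ := λ̂⁰ − η₀(Aū¹ + Bv̄¹ − c), λ*₁ := β₁⁻¹(c − Aū¹ − Bv̄¹); and for k ≥ 1 use τ_k := 3/(k+4), η_k := μ_g/(2‖A‖²), β_k := 18‖A‖²/(μ_g(k+1)(k+7)), with iterates λ̂ᵏ := (1−τ_k)λ̄ᵏ + τ_kλ*_k; ûᵏ⁺¹ := argmin_u { g(u) − ⟨Aᵀλ̂ᵏ, u⟩ }; v̂ᵏ⁺¹ := argmin_v { h(v) − ⟨Bᵀλ̂ᵏ, v⟩ + (η_k/2)‖Aûᵏ⁺¹ + Bv − c‖² }; λ̄ᵏ⁺¹ := λ̂ᵏ − η_k(Aûᵏ⁺¹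 + Bv̂ᵏ⁺¹ − c); λ*_{k+1} := β_{k+1}⁻¹[(1−τ_k)β_kλ*_k + τ_kη_k⁻¹(λ̄ᵏ⁺¹ − λ̂ᵏ)]; (ūᵏ⁺¹,v̄ᵏ⁺¹) := (1−τ_k)(ūᵏ,v̄ᵏ) + τ_k(ûᵏ⁺¹,v̂ᵏ⁺¹). Then for every k ≥ 1: f(x̄ᵏ) − f⋆ ≤ 9μ_gD_f²/(16‖A‖²(k+3)) and ‖Aūᵏ + Bv̄ᵏ − c‖ ≤ 36‖A‖²‖λ⋆‖/(μ_g(k+1)(k+7)) + 9D_f/(2√((k+1)(k+3)(k+7))), where x̄ᵏ = (ūᵏ, v̄ᵏ). -/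
/-!
Write `r = A u + B v - c` and `η = μg / (2‖A‖²)`.  The dual function `d` is the sum of a smooth part
with Lipschitz gradient (constant `‖A‖²/μg = 1/(2η)`, from strong convexity of `g`) and a convex
part, and each iteration is a forward-backward step on `d`.  Such a step from `λ̂` satisfies
`d(λ̄⁺) ≤ -f(x̂) + ⟪λ̂, r̂⟫ - (3η/4)‖r̂‖²` (`dual_step`).

Since `λ*_k = -β_k⁻¹ r̄ᵏ`, combining this with the Fenchel-Young inequality at `λ̄ᵏ` and convexity
of `f` shows that the smoothed gap `G_k = f(x̄ᵏ) + d(λ̄ᵏ) + ‖r̄ᵏ‖²/(2β_k)` obeys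
`G_{k+1} ≤ (1 - τ_k) G_k + (η τ_k²/4) Df²` after completing a square (`gap_step`), whence
`G_k ≤ 9ηDf²/(8(k+3))` by induction.  Weak duality `d ≥ -f⋆` turns this into the bound on the
objective, and the saddle-point inequality `f(x̄ᵏ) - f⋆ ≥ ⟪λ⋆, r̄ᵏ⟫` makes it a quadratic
inequality in `‖r̄ᵏ‖`, which gives the bound on the feasibility gap.
-/

open scoped RealInnerProductSpace

noncomputable section

lemma nonneg_of_quadratic_perturbation {X Y : ℝ}
    (H : ∀ t : ℝ, 0 < t → t < 1 → 0 ≤ t * X + t ^ 2 * Y) : 0 ≤ X := by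
  by_contra hX
  push Not at hX
  have hY : 0 < |Y| + 1 := by positivity
  -- A step `t` small enough that the quadratic term is at most half of `t * |X|`.
  set t := min (1 / 2) (-X / (2 * (|Y| + 1))) with ht
  have h0 : 0 < t := lt_min (by norm_num) (by apply div_pos <;> linarith)
  have h1 : t < 1 := lt_of_le_of_lt (min_le_left _ _) (by norm_num)
  have h2 : t * (2 * (|Y| + 1)) ≤ -X := by
    rw [← le_div_iff₀ (by positivity)]
    exact min_le_right _ _
  have h3 := H t h0 h1
  have h4 : 0 ≤ X + t * Y := by
    by_contra hc
    push Not at hc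
    nlinarith
  have h5 : t * Y ≤ t * |Y| := mul_le_mul_of_nonneg_left (le_abs_self Y) h0.le
  nlinarith

section Step

variable {E F G : Type*}
  [NormedAddCommGroup E] [InnerProductSpace ℝ E]
  [NormedAddCommGroup F] [InnerProductSpace ℝ F]
  [NormedAddCommGroup G] [InnerProductSpace ℝ G]

/-- Quadratic growth of a strongly convex function, tilted by a linear form, at its minimizer. -/
lemma strongConvex_growth {g : E → ℝ} {s : Set E} {μ : ℝ} (hg : StrongConvexOn s μ g)
    {z uh : E} (huh : uh ∈ s) (hmin : ∀ u ∈ s, g uh - ⟪z, uh⟫ ≤ g u - ⟪z, u⟫)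
    {u : E} (hu : u ∈ s) :
    g uh - ⟪z, uh⟫ + μ / 2 * ‖u - uh‖ ^ 2 ≤ g u - ⟪z, u⟫ := by
  have key : 0 ≤ g u - ⟪z, u⟫ - (g uh - ⟪z, uh⟫ + μ / 2 * ‖u - uh‖ ^ 2) := by
    apply nonneg_of_quadratic_perturbation (Y := μ / 2 * ‖u - uh‖ ^ 2)
    intro t ht0 ht1
    have hc := hg.2 hu huh ht0.le (by linarith : 0 ≤ 1 - t) (by ring)
    have hm := hmin _ (hg.1 hu huh ht0.le (by linarith : 0 ≤ 1 - t) (by ring))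
    simp only [inner_add_right, inner_smul_right, smul_eq_mul] at hc hm
    nlinarith
  linarith

/-- Optimality condition of the proximal step: `Bᵀ(l - η r)` is a subgradient of `h` at `vh`, where
`r = a + B vh` is the residual. -/
lemma prox_subgradient {h : F → ℝ} {s : Set F} (hh : ConvexOn ℝ s h) (B : F →L[ℝ] G)
    {η : ℝ} {a l : G} {vh : F} (hvh : vh ∈ s)
    (hmin : ∀ v ∈ s, h vh - ⟪l, B vh⟫ + η / 2 * ‖a + B vh‖ ^ 2
      ≤ h v - ⟪l, B v⟫ + η / 2 * ‖a + B v‖ ^ 2)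
    {v : F} (hv : v ∈ s) :
    h vh + ⟪l - η • (a + B vh), B v - B vh⟫ ≤ h v := by
  have key : 0 ≤ h v - (h vh + ⟪l - η • (a + B vh), B v - B vh⟫) := by
    apply nonneg_of_quadratic_perturbation (Y := η / 2 * ‖B v - B vh‖ ^ 2)
    intro t ht0 ht1
    have hc := hh.2 hv hvh ht0.le (by linarith : 0 ≤ 1 - t) (by ring)
    have hm := hmin _ (hh.1 hv hvh ht0.le (by linarith : 0 ≤ 1 - t) (by ring))
    have e1 : a + B (t • v + (1 - t) • vh) = (a + B vh) + t • (B v - B vh) := by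
      simp only [map_add, map_smul]; module
    have e2 : ⟪l, B (t • v + (1 - t) • vh)⟫ = ⟪l, B vh⟫ + t * ⟪l, B v - B vh⟫ := by
      simp only [map_add, map_smul, inner_add_right, inner_smul_right, inner_sub_right]; ring
    rw [e1, e2, norm_add_sq_real (a + B vh), norm_smul, mul_pow, inner_smul_right, Real.norm_eq_abs,
      sq_abs] at hm
    rw [inner_sub_left, inner_smul_left]
    simp only [smul_eq_mul, RCLike.conj_to_real] at hc ⊢
    nlinarith
  linarith

/-- One forward-backward step on the dual function with step size `η = μ / (2‖A‖²)`. -/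
lemma dual_step [CompleteSpace E] [CompleteSpace F] [CompleteSpace G] {g : E → ℝ} {domg : Set E} {h : F → ℝ} {domh : Set F}
    (A : E →L[ℝ] G) (B : F →L[ℝ] G) (c : G) {gstar : E → ℝ} {hstar : F → ℝ}
    (hgstar : ∀ z, IsLUB ((fun u => ⟪z, u⟫ - g u) '' domg) (gstar z))
    (hhstar : ∀ z, IsLUB ((fun v => ⟪z, v⟫ - h v) '' domh) (hstar z))
    {d : G → ℝ}
    (hd : ∀ lam, d lam = gstar ((ContinuousLinearMap.adjoint A) lam)
      + hstar ((ContinuousLinearMap.adjoint B) lam) - ⟪c, lam⟫)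
    (hh : ConvexOn ℝ domh h) (hA : 0 < ‖A‖) {μ : ℝ} (hμ : 0 < μ) (hg : StrongConvexOn domg μ g)
    {η : ℝ} (hη : η = μ / (2 * ‖A‖ ^ 2)) {l lp : G} {uh : E} {vh : F}
    (huh : uh ∈ domg ∧ ∀ u ∈ domg, g uh - ⟪(ContinuousLinearMap.adjoint A) l, uh⟫
      ≤ g u - ⟪(ContinuousLinearMap.adjoint A) l, u⟫)
    (hvh : vh ∈ domh ∧ ∀ v ∈ domh,
      h vh - ⟪(ContinuousLinearMap.adjoint B) l, vh⟫ + η / 2 * ‖A uh + B vh - c‖ ^ 2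
        ≤ h v - ⟪(ContinuousLinearMap.adjoint B) l, v⟫ + η / 2 * ‖A uh + B v - c‖ ^ 2)
    (hlp : lp = l - η • (A uh + B vh - c)) :
    d lp ≤ -(g uh + h vh) + ⟪l, A uh + B vh - c⟫ - 3 / 4 * η * ‖A uh + B vh - c‖ ^ 2 := by
  have hμη : μ = 2 * η * ‖A‖ ^ 2 := by rw [hη]; field_simp
  have hη0 : 0 < η := by rw [hη]; positivity
  obtain ⟨r, hr⟩ : ∃ r, r = A uh + B vh - c := ⟨_, rfl⟩
  have hG : gstar ((ContinuousLinearMap.adjoint A) lp)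
      ≤ ⟪lp, A uh⟫ - g uh + η / 4 * ‖r‖ ^ 2 := by
    refine (isLUB_le_iff (hgstar _)).2 ?_
    rintro _ ⟨u, hu, rfl⟩
    have hgr := strongConvex_growth hg huh.1 huh.2 hu
    simp only [ContinuousLinearMap.adjoint_inner_left] at hgr ⊢
    have hcs : -⟪r, A u - A uh⟫ ≤ ‖r‖ * (‖A‖ * ‖u - uh‖) := by
      have h1 := neg_le_of_abs_le (abs_real_inner_le_norm r (A u - A uh))
      have h2 : ‖A u - A uh‖ ≤ ‖A‖ * ‖u - uh‖ := by
        rw [← map_sub]; exact A.le_opNorm _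
      have h3 := mul_le_mul_of_nonneg_left h2 (norm_nonneg r)
      linarith
    rw [← hr] at hlp
    have e : ⟪lp, A u⟫ = ⟪lp, A uh⟫ + (⟪l, A u⟫ - ⟪l, A uh⟫) - η * ⟪r, A u - A uh⟫ := by
      rw [hlp]
      simp only [inner_sub_left, inner_sub_right, inner_smul_left, RCLike.conj_to_real]; ring
    have h4 := mul_le_mul_of_nonneg_left hcs hη0.le
    have h5 := mul_nonneg hη0.le (sq_nonneg (‖r‖ / 2 - ‖A‖ * ‖u - uh‖))
    rw [hμη] at hgr
    nlinarith
  have hH : hstar ((ContinuousLinearMap.adjoint B) lp) ≤ ⟪lp, B vh⟫ - h vh := by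
    refine (isLUB_le_iff (hhstar _)).2 ?_
    rintro _ ⟨v, hv, rfl⟩
    have e : ∀ w, A uh + B w - c = (A uh - c) + B w := fun w => by abel
    simp only [ContinuousLinearMap.adjoint_inner_left, e] at hvh hlp ⊢
    have := prox_subgradient hh B hvh.1 hvh.2 hv
    rw [← hlp, inner_sub_right] at this
    linarith
  have e1 : ⟪lp, A uh⟫ + ⟪lp, B vh⟫ - ⟪c, lp⟫ = ⟪l, r⟫ - η * ‖r‖ ^ 2 := by
    rw [real_inner_comm lp c, ← inner_add_right, ← inner_sub_right, ← hr, hlp, ← hr, inner_sub_left,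
      inner_smul_left, real_inner_self_eq_norm_sq]
    simp
  rw [hd, ← hr]
  linarith

/-- The recursion for the smoothed gap.  Here `1/β_k = η (k+1)(k+7)/9`, and `fb, fn, db, dn` stand for
`f(x̄ᵏ), f(x̄ᵏ⁺¹), d(λ̄ᵏ), d(λ̄ᵏ⁺¹)`. -/
lemma gap_step {rb rh : G} {k η D fb fn db dn fh : ℝ} (hk : 1 ≤ k) (hη : 0 < η)
    (hD : ‖rh‖ ^ 2 ≤ D ^ 2)
    (hf : fn ≤ (1 - 3 / (k + 4)) * fb + 3 / (k + 4) * fh)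
    (hdn : dn ≤ (1 - 3 / (k + 4)) * db - 3 / (k + 4) * fh
      - 3 / (k + 4) * (η * (k + 1) * (k + 7) / 9) * ⟪rb, rh⟫ - 3 / 4 * η * ‖rh‖ ^ 2)
    (hG : fb + db + η * (k + 1) * (k + 7) / 18 * ‖rb‖ ^ 2 ≤ 9 * η * D ^ 2 / (8 * (k + 3))) :
    fn + dn + η * (k + 2) * (k + 8) / 18 * ‖(1 - 3 / (k + 4)) • rb + (3 / (k + 4)) • rh‖ ^ 2
      ≤ 9 * η * D ^ 2 / (8 * (k + 4)) := by
  have hk4 : 0 < k + 4 := by linarith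
  have hτ : 1 - 3 / (k + 4) = (k + 1) / (k + 4) := by field_simp; ring
  have hQ : 0 ≤ (k + 1) ^ 2 * ‖rb‖ ^ 2 + 6 * (k + 1) * ⟪rb, rh⟫ + 9 * ‖rh‖ ^ 2 := by
    have h1 := sq_nonneg ‖(k + 1) • rb + (3 : ℝ) • rh‖
    rw [norm_add_sq_real, norm_smul, norm_smul, inner_smul_left, inner_smul_right, mul_pow,
      mul_pow, Real.norm_eq_abs, Real.norm_eq_abs, sq_abs, sq_abs] at h1
    simp only [RCLike.conj_to_real] at h1
    linarith
  have hN : ‖(1 - 3 / (k + 4)) • rb + (3 / (k + 4)) • rh‖ ^ 2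
      = ((k + 1) ^ 2 * ‖rb‖ ^ 2 + 6 * (k + 1) * ⟪rb, rh⟫ + 9 * ‖rh‖ ^ 2) / (k + 4) ^ 2 := by
    rw [hτ, norm_add_sq_real, norm_smul, norm_smul, inner_smul_left, inner_smul_right, mul_pow,
      mul_pow, Real.norm_eq_abs, Real.norm_eq_abs, sq_abs, sq_abs]
    simp only [RCLike.conj_to_real]
    field_simp
    ring
  rw [hN]
  rw [hτ] at hf hdn
  have hG2 := mul_le_mul_of_nonneg_left hG (by positivity : 0 ≤ (k + 1) / (k + 4))
  generalize ‖rb‖ ^ 2 = x at *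
  generalize ⟪rb, rh⟫ = p at *
  have hy0 : 0 ≤ ‖rh‖ ^ 2 := sq_nonneg _
  generalize ‖rh‖ ^ 2 = y at *
  have hQ2 : 0 ≤ η * (k + 12) / (18 * (k + 4) ^ 2)
      * ((k + 1) ^ 2 * x + 6 * (k + 1) * p + 9 * y) := by positivity
  -- Completing the square in `rb` leaves the coefficient `η (9 - (k+1)²) / (4 (k+4)²)` of `‖rh‖²`.
  have hrec : fn + dn + η * (k + 2) * (k + 8) / 18
        * (((k + 1) ^ 2 * x + 6 * (k + 1) * p + 9 * y) / (k + 4) ^ 2)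
      ≤ (k + 1) / (k + 4) * (9 * η * D ^ 2 / (8 * (k + 3)))
        + η * (9 - (k + 1) ^ 2) / (4 * (k + 4) ^ 2) * y := by
    have hid : (k + 1) / (k + 4) * (fb + db + η * (k + 1) * (k + 7) / 18 * x)
        + η * (9 - (k + 1) ^ 2) / (4 * (k + 4) ^ 2) * y
        - η * (k + 12) / (18 * (k + 4) ^ 2) * ((k + 1) ^ 2 * x + 6 * (k + 1) * p + 9 * y)
        = (k + 1) / (k + 4) * fb + 3 / (k + 4) * fh
        + ((k + 1) / (k + 4) * db - 3 / (k + 4) * fh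
          - 3 / (k + 4) * (η * (k + 1) * (k + 7) / 9) * p - 3 / 4 * η * y)
        + η * (k + 2) * (k + 8) / 18
          * (((k + 1) ^ 2 * x + 6 * (k + 1) * p + 9 * y) / (k + 4) ^ 2) := by
      field_simp
      ring
    linarith
  have h9 : η * (9 - (k + 1) ^ 2) / (4 * (k + 4) ^ 2) * y ≤ η * 9 / (4 * (k + 4) ^ 2) * D ^ 2 := by
    have : η * (9 - (k + 1) ^ 2) / (4 * (k + 4) ^ 2) ≤ η * 9 / (4 * (k + 4) ^ 2) := by
      gcongr
      nlinarith [sq_nonneg (k + 1)]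
    calc _ ≤ η * 9 / (4 * (k + 4) ^ 2) * y := mul_le_mul_of_nonneg_right this hy0
      _ ≤ _ := by gcongr
  have hk3 : 0 < k + 3 := by linarith
  have hfin : 9 * η * D ^ 2 / (8 * (k + 4)) - ((k + 1) / (k + 4) * (9 * η * D ^ 2 / (8 * (k + 3)))
        + η * 9 / (4 * (k + 4) ^ 2) * D ^ 2)
      = 9 * η * D ^ 2 / (4 * (k + 3) * (k + 4) ^ 2) := by
    field_simp
    ring
  have : 0 ≤ 9 * η * D ^ 2 / (4 * (k + 3) * (k + 4) ^ 2) := by positivity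
  linarith

end Step

theorem stmt_11 {p₁ p₂ n : ℕ}
    (g : EuclideanSpace ℝ (Fin p₁) → ℝ) (domg : Set (EuclideanSpace ℝ (Fin p₁)))
    (h : EuclideanSpace ℝ (Fin p₂) → ℝ) (domh : Set (EuclideanSpace ℝ (Fin p₂)))
    (A : EuclideanSpace ℝ (Fin p₁) →L[ℝ] EuclideanSpace ℝ (Fin n))
    (B : EuclideanSpace ℝ (Fin p₂) →L[ℝ] EuclideanSpace ℝ (Fin n))
    (c : EuclideanSpace ℝ (Fin n))
    (hgconv : ConvexOn ℝ domg g) (hglsc : LowerSemicontinuousOn g domg)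
    (hgne : domg.Nonempty)
    (hhconv : ConvexOn ℝ domh h) (hhlsc : LowerSemicontinuousOn h domh)
    (hhne : domh.Nonempty)
    (gstar : EuclideanSpace ℝ (Fin p₁) → ℝ) (hstar : EuclideanSpace ℝ (Fin p₂) → ℝ)
    (hgstar : ∀ z, IsLUB ((fun u => ⟪z, u⟫ - g u) '' domg) (gstar z))
    (hhstar : ∀ z, IsLUB ((fun v => ⟪z, v⟫ - h v) '' domh) (hstar z))
    (d : EuclideanSpace ℝ (Fin n) → ℝ)
    (hd : ∀ lam, d lam = gstar ((ContinuousLinearMap.adjoint A) lam) + hstar ((ContinuousLinearMap.adjoint B) lam) - ⟪c, lam⟫)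
    (ustar : EuclideanSpace ℝ (Fin p₁)) (vstar : EuclideanSpace ℝ (Fin p₂)) (lamstar : EuclideanSpace ℝ (Fin n))
    (hustar : ustar ∈ domg) (hvstar : vstar ∈ domh)
    (hkkt0 : A ustar + B vstar = c)
    (hkktg : ∀ u ∈ domg, g ustar + ⟪(ContinuousLinearMap.adjoint A) lamstar, u - ustar⟫ ≤ g u)
    (hkkth : ∀ v ∈ domh, h vstar + ⟪(ContinuousLinearMap.adjoint B) lamstar, v - vstar⟫ ≤ h v)
    (hA : 0 < ‖A‖)
    (μg : ℝ) (hμg : 0 < μg) (hgsc : StrongConvexOn domg μg g)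
    (fstar : ℝ)
    (hfs : fstar = g ustar + h vstar)
    (hfd : fstar = -(d lamstar))
    (Df : ℝ)
    (hDf : IsLUB {r : ℝ | ∃ u ∈ domg, ∃ v ∈ domh, r = ‖A u + B v - c‖} Df)
    (ub : ℕ → EuclideanSpace ℝ (Fin p₁)) (vb : ℕ → EuclideanSpace ℝ (Fin p₂)) (lb ls lh : ℕ → EuclideanSpace ℝ (Fin n))
    (uh : ℕ → EuclideanSpace ℝ (Fin p₁)) (vh : ℕ → EuclideanSpace ℝ (Fin p₂))
    (hub1 : ub 1 ∈ domg ∧ ∀ u ∈ domg,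
      g (ub 1) - ⟪(ContinuousLinearMap.adjoint A) 0, ub 1⟫ ≤ g u - ⟪(ContinuousLinearMap.adjoint A) 0, u⟫)
    (hvb1 : vb 1 ∈ domh ∧ ∀ v ∈ domh,
      h (vb 1) - ⟪(ContinuousLinearMap.adjoint B) 0, vb 1⟫ + (μg/(2*‖A‖^2))/2 * ‖A (ub 1) + B (vb 1) - c‖^2
        ≤ h v - ⟪(ContinuousLinearMap.adjoint B) 0, v⟫ + (μg/(2*‖A‖^2))/2 * ‖A (ub 1) + B v - c‖^2)
    (hlb1 : lb 1 = (0 : EuclideanSpace ℝ (Fin n)) - (μg/(2*‖A‖^2)) • (A (ub 1) + B (vb 1) - c))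
    (hls1 : ls 1 = (18*‖A‖^2/(μg*2*8))⁻¹ • (c - A (ub 1) - B (vb 1)))
    (hlh : ∀ k : ℕ, 1 ≤ k →
      lh k = (1 - 3/((k:ℝ)+4)) • lb k + (3/((k:ℝ)+4)) • ls k)
    (huh : ∀ k : ℕ, 1 ≤ k → uh (k+1) ∈ domg ∧ ∀ u ∈ domg,
      g (uh (k+1)) - ⟪(ContinuousLinearMap.adjoint A) (lh k), uh (k+1)⟫ ≤ g u - ⟪(ContinuousLinearMap.adjoint A) (lh k), u⟫)
    (hvh : ∀ k : ℕ, 1 ≤ k → vh (k+1) ∈ domh ∧ ∀ v ∈ domh,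
      h (vh (k+1)) - ⟪(ContinuousLinearMap.adjoint B) (lh k), vh (k+1)⟫
          + (μg/(2*‖A‖^2))/2 * ‖A (uh (k+1)) + B (vh (k+1)) - c‖^2
        ≤ h v - ⟪(ContinuousLinearMap.adjoint B) (lh k), v⟫ + (μg/(2*‖A‖^2))/2 * ‖A (uh (k+1)) + B v - c‖^2)
    (hlbk : ∀ k : ℕ, 1 ≤ k →
      lb (k+1) = lh k - (μg/(2*‖A‖^2)) • (A (uh (k+1)) + B (vh (k+1)) - c))
    (hlsk : ∀ k : ℕ, 1 ≤ k →
      ls (k+1) = (18*‖A‖^2/(μg*((k:ℝ)+2)*((k:ℝ)+8)))⁻¹ •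
        (((1 - 3/((k:ℝ)+4)) * (18*‖A‖^2/(μg*((k:ℝ)+1)*((k:ℝ)+7)))) • ls k
          + ((3/((k:ℝ)+4)) * (μg/(2*‖A‖^2))⁻¹) • (lb (k+1) - lh k)))
    (hubk : ∀ k : ℕ, 1 ≤ k →
      ub (k+1) = (1 - 3/((k:ℝ)+4)) • ub k + (3/((k:ℝ)+4)) • uh (k+1))
    (hvbk : ∀ k : ℕ, 1 ≤ k →
      vb (k+1) = (1 - 3/((k:ℝ)+4)) • vb k + (3/((k:ℝ)+4)) • vh (k+1)) :
    ∀ k : ℕ, 1 ≤ k →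
      g (ub k) + h (vb k) - fstar ≤ 9*μg*Df^2/(16*‖A‖^2*((k:ℝ)+3)) ∧
      ‖A (ub k) + B (vb k) - c‖
        ≤ 36*‖A‖^2*‖lamstar‖/(μg*((k:ℝ)+1)*((k:ℝ)+7))
          + 9*Df/(2*Real.sqrt (((k:ℝ)+1)*((k:ℝ)+3)*((k:ℝ)+7))) := by
  obtain ⟨η, hη⟩ : ∃ η, η = μg / (2 * ‖A‖ ^ 2) := ⟨_, rfl⟩
  have hη0 : 0 < η := by rw [hη]; positivity
  rw [← hη] at hvb1 hlb1
  simp only [← hη] at hvh hlbk hlsk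
  have hβ : ∀ a b : ℝ, (18 * ‖A‖ ^ 2 / (μg * a * b))⁻¹ = η * a * b / 9 := by
    intro a b
    rw [hη, inv_div]
    field_simp
    ring
  have hres : ∀ u ∈ domg, ∀ v ∈ domh, ‖A u + B v - c‖ ^ 2 ≤ Df ^ 2 := fun u hu v hv =>
    pow_le_pow_left₀ (norm_nonneg _) (hDf.1 ⟨u, hu, v, hv, rfl⟩) 2
  have hDf0 : 0 ≤ Df := (norm_nonneg _).trans (hDf.1 ⟨ustar, hustar, vstar, hvstar, rfl⟩)
  have hFY : ∀ l, ∀ u ∈ domg, ∀ v ∈ domh, ⟪l, A u + B v - c⟫ - (g u + h v) ≤ d l := by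
    intro l u hu v hv
    have h1 := (hgstar ((ContinuousLinearMap.adjoint A) l)).1 ⟨u, hu, rfl⟩
    have h2 := (hhstar ((ContinuousLinearMap.adjoint B) l)).1 ⟨v, hv, rfl⟩
    simp only [ContinuousLinearMap.adjoint_inner_left] at h1 h2
    rw [hd, inner_sub_right, inner_add_right, real_inner_comm l c]
    linarith
  have inv : ∀ k : ℕ, 1 ≤ k → ub k ∈ domg ∧ vb k ∈ domh ∧
      ls k = -(η * ((k:ℝ) + 1) * ((k:ℝ) + 7) / 9) • (A (ub k) + B (vb k) - c) ∧
      g (ub k) + h (vb k) + d (lb k)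
        + η * ((k:ℝ) + 1) * ((k:ℝ) + 7) / 18 * ‖A (ub k) + B (vb k) - c‖ ^ 2
        ≤ 9 * η * Df ^ 2 / (8 * ((k:ℝ) + 3)) := by
    intro k hk
    induction k, hk using Nat.le_induction with
    | base =>
      refine ⟨hub1.1, hvb1.1, ?_, ?_⟩
      · rw [hls1, hβ]
        norm_num
        module
      · have h1 := dual_step A B c hgstar hhstar hd hhconv hA hμg hgsc hη hub1 hvb1 hlb1
        have h2 := mul_le_mul_of_nonneg_left (hres _ hub1.1 _ hvb1.1) hη0.le
        have h3 := mul_nonneg hη0.le (sq_nonneg Df)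
        rw [inner_zero_left] at h1
        push_cast
        norm_num
        nlinarith
    | succ k hk ih =>
      obtain ⟨hu, hv, hls, hG⟩ := ih
      have hk1 : (1:ℝ) ≤ k := by exact_mod_cast hk
      obtain ⟨hu', hv'⟩ := And.intro (huh k hk) (hvh k hk)
      have hτ0 : 0 ≤ 3 / ((k:ℝ) + 4) := by positivity
      have hτ1 : 0 ≤ 1 - 3 / ((k:ℝ) + 4) := by
        rw [sub_nonneg, div_le_one (by positivity)]; linarith
      have hr : A (ub (k+1)) + B (vb (k+1)) - c
          = (1 - 3 / ((k:ℝ) + 4)) • (A (ub k) + B (vb k) - c)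
            + (3 / ((k:ℝ) + 4)) • (A (uh (k+1)) + B (vh (k+1)) - c) := by
        rw [hubk k hk, hvbk k hk]
        simp only [map_add, map_smul]
        module
      have c8 : ((k + 1 : ℕ) : ℝ) + 7 = (k:ℝ) + 8 := by push_cast; ring
      have c2 : ((k + 1 : ℕ) : ℝ) + 1 = (k:ℝ) + 2 := by push_cast; ring
      have c4 : ((k + 1 : ℕ) : ℝ) + 3 = (k:ℝ) + 4 := by push_cast; ring
      rw [c8, c2, c4]
      refine ⟨?_, ?_, ?_, ?_⟩
      · rw [hubk k hk]
        exact hgconv.1 hu hu'.1 hτ1 hτ0 (by ring)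
      · rw [hvbk k hk]
        exact hhconv.1 hv hv'.1 hτ1 hτ0 (by ring)
      · rw [hlsk k hk, hβ, hr, hls, hlbk k hk]
        have e : 18 * ‖A‖ ^ 2 / (μg * ((k:ℝ) + 1) * ((k:ℝ) + 7))
            = (η * ((k:ℝ) + 1) * ((k:ℝ) + 7) / 9)⁻¹ := by rw [← hβ, inv_inv]
        have hne : η * ((k:ℝ) + 1) * ((k:ℝ) + 7) / 9 ≠ 0 := by positivity
        rw [e]
        generalize η * ((k:ℝ) + 1) * ((k:ℝ) + 7) / 9 = q at hne
        generalize A (ub k) + B (vb k) - c = r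
        generalize A (uh (k+1)) + B (vh (k+1)) - c = r'
        rw [sub_sub_cancel_left, smul_smul, smul_neg, smul_smul, neg_smul, ← smul_neg]
        rw [mul_neg, mul_assoc _ q⁻¹, inv_mul_cancel₀ hne, mul_assoc _ η⁻¹, inv_mul_cancel₀ hη0.ne']
        module
      · rw [hr]
        refine gap_step (fb := g (ub k) + h (vb k)) (db := d (lb k))
          (fh := g (uh (k+1)) + h (vh (k+1))) hk1 hη0 (hres _ hu'.1 _ hv'.1) ?_ ?_ hG
        · have h1 := hgconv.2 hu hu'.1 hτ1 hτ0 (by ring)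
          have h2 := hhconv.2 hv hv'.1 hτ1 hτ0 (by ring)
          rw [← hubk k hk] at h1
          rw [← hvbk k hk] at h2
          simp only [smul_eq_mul] at h1 h2
          linarith
        · have h1 := dual_step A B c hgstar hhstar hd hhconv hA hμg hgsc hη hu' hv' (hlbk k hk)
          have h2 := mul_le_mul_of_nonneg_left (hFY (lb k) _ hu'.1 _ hv'.1) hτ1
          rw [hlh k hk, hls] at h1
          simp only [inner_add_left, inner_smul_left, RCLike.conj_to_real] at h1
          linarith
  intro k hk
  obtain ⟨hu, hv, -, hG⟩ := inv k hk
  have hweak : -fstar ≤ d (lb k) := by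
    have := hFY (lb k) _ hustar _ hvstar
    rw [hkkt0, sub_self, inner_zero_right] at this
    linarith
  have hsaddle : -(‖lamstar‖ * ‖A (ub k) + B (vb k) - c‖) ≤ g (ub k) + h (vb k) - fstar := by
    have h1 := hkktg _ hu
    have h2 := hkkth _ hv
    have h3 := neg_le_of_abs_le (abs_real_inner_le_norm lamstar (A (ub k) + B (vb k) - c))
    have e : ⟪lamstar, A (ub k) + B (vb k) - c⟫
        = ⟪lamstar, A (ub k - ustar)⟫ + ⟪lamstar, B (vb k - vstar)⟫ := by
      rw [← inner_add_right, ← hkkt0]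
      simp only [map_sub]
      congr 1
      abel
    simp only [ContinuousLinearMap.adjoint_inner_left] at h1 h2
    linarith
  have hk0 : (0:ℝ) ≤ k := Nat.cast_nonneg k
  have hE : 9 * μg * Df ^ 2 / (16 * ‖A‖ ^ 2 * ((k:ℝ) + 3))
      = 9 * η * Df ^ 2 / (8 * ((k:ℝ) + 3)) := by
    rw [hη]; field_simp; ring
  have hl : 36 * ‖A‖ ^ 2 * ‖lamstar‖ / (μg * ((k:ℝ) + 1) * ((k:ℝ) + 7))
      = 18 * ‖lamstar‖ / (η * ((k:ℝ) + 1) * ((k:ℝ) + 7)) := by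
    rw [hη]; field_simp; ring
  rw [hE, hl]
  have hR0 := norm_nonneg (A (ub k) + B (vb k) - c)
  generalize ‖A (ub k) + B (vb k) - c‖ = R at *
  constructor
  · have : 0 ≤ η * ((k:ℝ) + 1) * ((k:ℝ) + 7) / 18 * R ^ 2 := by positivity
    linarith
  · set S := 9 * Df / (2 * Real.sqrt (((k:ℝ)+1)*((k:ℝ)+3)*((k:ℝ)+7))) with hS
    have hS0 : 0 ≤ S := by positivity
    set M := 18 * ‖lamstar‖ / (η * ((k:ℝ) + 1) * ((k:ℝ) + 7)) with hM
    have hM0 : 0 ≤ M := by positivity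
    have hS2 : S ^ 2 = 81 * Df ^ 2 / (4 * (((k:ℝ)+1)*((k:ℝ)+3)*((k:ℝ)+7))) := by
      rw [hS, div_pow, mul_pow, mul_pow, Real.sq_sqrt (by positivity)]
      norm_num
    -- Dividing the gap bound by `1/(2β_k)` turns it into `R² ≤ M R + S²`.
    have hquad : R ^ 2 ≤ M * R + S ^ 2 := by
      have h1 : η * ((k:ℝ) + 1) * ((k:ℝ) + 7) / 18 * R ^ 2
          ≤ ‖lamstar‖ * R + 9 * η * Df ^ 2 / (8 * ((k:ℝ) + 3)) := by linarith
      have hq : 0 < η * ((k:ℝ) + 1) * ((k:ℝ) + 7) / 18 := by positivity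
      refine le_of_mul_le_mul_left (h1.trans_eq ?_) hq
      rw [hS2, hM]
      field_simp
      ring
    by_contra hc
    push Not at hc
    nlinarith
end
end
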